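/- arXiv:1912.10365 — 2 statements merged into one kernel-verified Lean document; each statement's English description precedes it below -/
import Mathlib

section
/- Let q = p^f be a power of a prime p, let d ≥ 0 and let k > 0 be an integer. Then in F_q[t] one has Σ_{a monic of degree d} a^k = (-1)^d · Σ_{(m_0,…,m_d)} multinomial(k; m_0,…,m_d) · t^{d·m_0 + (d-1)·m_1 + … + 1·m_{d-1}}, where the sum on the right runs over all (d+1)-tuples (m_0,…,m_d) of nonnegative integers such that m_0 + m_1 + … + m_d = k with no carrying of base-p digits, and m_i > 0 with (q-1) | m_i for all 1 ≤ i ≤ d, and where the multinomial coefficients are reduced modulo p. -/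
/-!
Write a monic polynomial as `∑ i, b i * X ^ (d - i)` with `b 0 = 1` and expand its `k`-th power by
the multinomial theorem (`powerSum_eq`). Summing over the free coefficients `b 1, …, b d` replaces
the monomial in the `b i` by the product of the sums `∑ x : F, x ^ m i`; each such sum is `-1` if
`m i > 0` and `(q - 1) ∣ m i`, and `0` otherwise (`sum_pow_field`). This yields the sign
`(-1) ^ d` and the conditions on the `m i` for `i ≥ 1`. The no-carry condition is then free: a
multinomial coefficient coming from a sum with a carry is divisible by `p`
(`noCarry_of_not_dvd`).
-/

open Polynomial

open scoped Classical

/-- The monic polynomial `X^d + c_{d-1} X^{d-1} + ... + c_0` determined by its lower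
coefficients `c : Fin d → F`; these parametrize the monic polynomials of degree `d`. -/
noncomputable def monicPoly (F : Type) [Field F] (d : ℕ) (c : Fin d → F) : F[X] :=
  X ^ d + ∑ i : Fin d, C (c i) * X ^ (i : ℕ)

/-- `S_d(-k) = Σ_{a monic of degree d} a^k`. -/
noncomputable def powerSum (F : Type) [Field F] [Fintype F] (d k : ℕ) : F[X] :=
  ∑ c : Fin d → F, monicPoly F d c ^ k

/-- `S̃_d(-k) = Σ_{a monic of degree d, v ∤ a} a^k`. -/
noncomputable def rPowerSum (F : Type) [Field F] [Fintype F] (v : F[X]) (d k : ℕ) : F[X] :=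
  ∑ c : Fin d → F, if v ∣ monicPoly F d c then 0 else monicPoly F d c ^ k

/-- `∑ i, m i = k` with no carrying of base-`p` digits. -/
def NoCarry (p : ℕ) {n : ℕ} (m : Fin n → ℕ) (k : ℕ) : Prop :=
  (∑ i, m i = k) ∧
    ∀ j : ℕ, (∑ i, (Nat.digits p (m i)).getD j 0) = (Nat.digits p k).getD j 0

/-- `U_d(k)`. -/
def Uset (p q d k : ℕ) : Set (Fin (d + 1) → ℕ) :=
  {m | NoCarry p m k ∧ ∀ i : Fin (d + 1), 0 < (i : ℕ) → 0 < m i ∧ (q - 1) ∣ m i}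

/-- `V_d(k)`. -/
def Vset (p q d k : ℕ) : Set (Fin (d + 1) → ℕ) :=
  {m | m ∈ Uset p q d k ∧ 0 < m 0}

/-- `W_d(k)`, the index set for the restricted power sum at `v = t`. -/
def Wset (p q d k : ℕ) : Set (Fin (d + 1) → ℕ) :=
  {m | NoCarry p m k ∧
      (∀ i : Fin (d + 1), 0 < (i : ℕ) → (i : ℕ) < d → 0 < m i ∧ (q - 1) ∣ m i) ∧
      (q - 1) ∣ m (Fin.last d)}

/-- the weight `d·m_0 + (d-1)·m_1 + ⋯ + 1·m_{d-1}`. -/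
def wt {d : ℕ} (m : Fin (d + 1) → ℕ) : ℕ := ∑ i : Fin (d + 1), (d - (i : ℕ)) * m i

/-- `L_k = min_{0 ≤ i ≤ f-1} l(k·p^i)/(q-1)` where `l` is the base-`q` digit sum. -/
noncomputable def Lval (q p f k : ℕ) : ℚ :=
  (Finset.Icc 0 (f - 1)).inf' ⟨0, by simp⟩
    (fun i => ((Nat.digits q (k * p ^ i)).sum : ℚ) / ((q : ℚ) - 1))

/-- the `v`-adic multiple zeta value at negative integers `s_1, …, s_r`. -/
noncomputable def zetaV (F : Type) [Field F] [Fintype F] (v : F[X]) {r : ℕ}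
    (s : Fin r → ℤ) : F[X] :=
  ∑ᶠ d ∈ {d : Fin r → ℕ | StrictAnti d}, ∏ i, rPowerSum F v (d i) (-(s i)).toNat

/-- the multiple zeta value at negative integers `s_1, …, s_r`. -/
noncomputable def zetaMZV (F : Type) [Field F] [Fintype F] {r : ℕ} (s : Fin r → ℤ) : F[X] :=
  ∑ᶠ d ∈ {d : Fin r → ℕ | StrictAnti d}, ∏ i, powerSum F (d i) (-(s i)).toNat

/-- the trivial-zero condition for a prime of degree `e`. -/
def TrivialZeroCond (q p f : ℕ) {r : ℕ} (s : Fin r → ℤ) (e : ℕ) : Prop :=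
  (∃ i : Fin r, s i < 0 ∧
      Lval q p f (-(s i)).toNat + (e : ℚ) < ((r - 1 - (i : ℕ) : ℕ) : ℚ)) ∨
  (∃ i j : Fin r, j < i ∧ s i < 0 ∧ s j < 0 ∧
      (r - 1 - (i : ℕ) : ℕ) < e ∧
      Lval q p f (-(s i)).toNat < ((r - 1 - (i : ℕ) : ℕ) : ℚ) ∧
      Lval q p f (-(s j)).toNat < (((i : ℕ) - (j : ℕ) : ℕ) : ℚ))

/-- Character orthogonality over a finite field. At `n = 0` the sum is `q = 0` in `F`, which is
why the exponent has to be positive. -/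
lemma sum_pow_field (F : Type) [Field F] [Fintype F] (n : ℕ) :
    ∑ x : F, x ^ n = if 0 < n ∧ (Fintype.card F - 1) ∣ n then -1 else 0 := by
  rcases Nat.eq_zero_or_pos n with rfl | hn
  · simp
  have h := FiniteField.sum_pow_units F n
  simp only [hn, true_and]
  refine Eq.trans ?_ (h.trans (by congr))
  rw [← Finset.sum_subset (Finset.subset_univ (Finset.univ.image (fun u : Fˣ => (u : F))))]
  · rw [Finset.sum_image (fun a _ b _ h => Units.ext h)]
  · intro x _ hx
    have : x = 0 := by
      by_contra h0
      exact hx (Finset.mem_image.2 ⟨Units.mk0 x h0, Finset.mem_univ _, rfl⟩)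
    rw [this, zero_pow hn.ne']

/-- The direction of Kummer's theorem for multinomials that is needed: a multinomial coefficient
that is nonzero mod `p` comes from a sum without carries. By Legendre's formula the `p`-adic
valuation of the coefficient is `∑ j ≥ 1, (⌊k / p ^ j⌋ - ∑ i, ⌊m i / p ^ j⌋)` with all terms
nonnegative. -/
lemma noCarry_of_not_dvd {p n : ℕ} (hp : p.Prime) (m : Fin n → ℕ)
    (h : ¬ p ∣ Nat.multinomial Finset.univ m) : NoCarry p m (∑ i, m i) := by
  have := Fact.mk hp
  refine ⟨rfl, fun j => ?_⟩
  set k := ∑ i, m i with hk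
  have hle : ∀ j, ∑ i, m i / p ^ j ≤ k / p ^ j := by
    intro j
    rw [Nat.le_div_iff_mul_le (pow_pos hp.pos j), Finset.sum_mul]
    exact Finset.sum_le_sum fun i _ => Nat.div_mul_le_self _ _
  -- Equality of the sums over `j` forces equality in each of the termwise inequalities `hle`.
  have key : ∀ j, ∑ i, m i / p ^ j = k / p ^ j := by
    intro j
    rcases Nat.eq_zero_or_pos j with rfl | hj
    · simp [hk]
    set b := Nat.log p k + j + 1 with hb
    have hval : ∑ i, padicValNat p (m i).factorial = padicValNat p k.factorial := by
      rw [← Nat.multinomial_spec, padicValNat.mul, padicValNat.eq_zero_of_not_dvd h, add_zero]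
      · simp only [← Nat.factorization_def _ hp]
        exact (Nat.factorization_prod_apply fun i _ => Nat.factorial_ne_zero _).symm
      · exact Finset.prod_ne_zero_iff.2 fun i _ => Nat.factorial_ne_zero _
      · rintro h0; simp [h0] at h
    rw [padicValNat_factorial (b := b) (by omega)] at hval
    have hmi : ∀ i, padicValNat p (m i).factorial = ∑ j ∈ Finset.Ico 1 b, m i / p ^ j := by
      intro i
      apply padicValNat_factorial
      have : Nat.log p (m i) ≤ Nat.log p k :=
        Nat.log_mono_right (Finset.single_le_sum (fun _ _ => Nat.zero_le _) (Finset.mem_univ i))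
      omega
    simp only [hmi] at hval
    rw [Finset.sum_comm] at hval
    exact (Finset.sum_eq_sum_iff_of_le fun j _ => hle j).1 hval j (by simp; omega)
  have hdig : ∀ a : ℕ, (Nat.digits p a).getD j 0 + p * (a / p ^ (j + 1)) = a / p ^ j := by
    intro a
    rw [Nat.getD_digits _ _ hp.two_le, pow_succ, ← Nat.div_div_eq_div_mul]
    exact Nat.mod_add_div _ _
  have h1 := Finset.sum_congr rfl fun i (_ : i ∈ Finset.univ) => hdig (m i)
  rw [Finset.sum_add_distrib, ← Finset.mul_sum, key, key, ← hdig k] at h1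
  exact Nat.add_right_cancel h1

/-- A monic polynomial written from the leading term down, matching the order of the indices
in `wt`. -/
lemma monicPoly_eq (F : Type) [Field F] (d : ℕ) (c : Fin d → F) :
    monicPoly F d c =
      ∑ i : Fin (d + 1), C ((Fin.cons 1 (c ∘ Fin.rev) : Fin (d + 1) → F) i) * X ^ (d - (i : ℕ)) := by
  rw [Fin.sum_univ_succ, monicPoly]
  congr 1
  · simp
  · rw [← Equiv.sum_comp Fin.revPerm]
    refine Finset.sum_congr rfl fun i _ => ?_
    simp [Fin.val_rev]

/-- The power sum after expanding by the multinomial theorem and summing over each coefficient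
separately. -/
lemma powerSum_eq (F : Type) [Field F] [Fintype F] (d k : ℕ) :
    powerSum F d k = ∑ m ∈ Finset.piAntidiag (Finset.univ : Finset (Fin (d + 1))) k,
      (Nat.multinomial Finset.univ m : F[X]) *
        (C (∏ i : Fin d, ∑ x : F, x ^ m i.succ) * X ^ wt m) := by
  have hexp : ∀ c : Fin d → F, monicPoly F d c ^ k =
      ∑ m ∈ Finset.piAntidiag (Finset.univ : Finset (Fin (d + 1))) k,
        (Nat.multinomial Finset.univ m : F[X]) *
          (C (∏ i : Fin d, c i.rev ^ m i.succ) * X ^ wt m) := by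
    intro c
    rw [monicPoly_eq, Finset.sum_pow_eq_sum_piAntidiag]
    refine Finset.sum_congr rfl fun m _ => ?_
    simp only [mul_pow, Finset.prod_mul_distrib, ← pow_mul, Finset.prod_pow_eq_pow_sum, wt]
    congr 2
    rw [Fin.prod_univ_succ]
    simp [map_prod]
  simp only [powerSum, hexp]
  rw [Finset.sum_comm]
  refine Finset.sum_congr rfl fun m _ => ?_
  rw [← Finset.mul_sum, ← Finset.sum_mul, ← map_sum]
  congr 3
  rw [Finset.prod_univ_sum, Fintype.piFinset_univ]
  exact Equiv.sum_comp (Equiv.arrowCongr Fin.revPerm (Equiv.refl F))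
    (fun c : Fin d → F => ∏ i, c i ^ m i.succ)

theorem stmt0 (p f q : ℕ) (hp : p.Prime) (hf : 0 < f) (hq : q = p ^ f)
    (F : Type) [Field F] [Fintype F] (hF : Fintype.card F = q)
    (d k : ℕ) (hk : 0 < k) :
    powerSum F d k =
      (-1 : F[X]) ^ d *
        ∑ᶠ m ∈ Uset p q d k, (Nat.multinomial Finset.univ m : F[X]) * X ^ wt m := by
  have := Fact.mk hp
  have : CharP F p := charP_of_card_eq_prime_pow (f := f) (by rw [hF, hq])
  have hU : Uset p q d k = ↑((Finset.piAntidiag (Finset.univ : Finset (Fin (d + 1))) k).filter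
      (· ∈ Uset p q d k)) := by
    ext m
    simp only [Finset.coe_filter, Set.mem_ofPred_eq, Finset.mem_piAntidiag]
    exact ⟨fun h => ⟨⟨h.1.1, fun _ _ => Finset.mem_univ _⟩, h⟩, fun h => h.2⟩
  rw [hU, finsum_mem_coe_finset, Finset.sum_filter, powerSum_eq, Finset.mul_sum]
  refine Finset.sum_congr rfl fun m hm => ?_
  -- Tuples with a carry contribute nothing, since their multinomial coefficient is `0` mod `p`.
  by_cases hdvd : p ∣ Nat.multinomial Finset.univ m
  · have : (Nat.multinomial Finset.univ m : F[X]) = 0 := (CharP.cast_eq_zero_iff F[X] p _).2 hdvd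
    simp [this]
  have hnc := noCarry_of_not_dvd hp m hdvd
  rw [(Finset.mem_piAntidiag.1 hm).1] at hnc
  have hmem : m ∈ Uset p q d k ↔ ∀ i : Fin d, 0 < m i.succ ∧ (q - 1) ∣ m i.succ := by
    refine ⟨fun h i => h.2 _ (by simp), fun h => ⟨hnc, fun i => ?_⟩⟩
    refine Fin.cases (by simp) (fun i _ => h i) i
  simp only [sum_pow_field, hF]
  split_ifs with h
  · rw [Finset.prod_congr rfl fun i _ => if_pos (hmem.1 h i)]
    simp
    ring
  · obtain ⟨i, hi⟩ := not_forall.1 (mt hmem.2 h)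
    rw [Finset.prod_eq_zero (Finset.mem_univ i) (if_neg hi)]
    simp
end

section
/- Let q = p^f be a power of a prime p, let d ≥ 0 and k > 0. Then the power sum S_d(-k) = Σ_{a monic of degree d in F_q[t]} a^k is nonzero if and only if U_d(k) is nonempty. (Carlitz–Diaz-Vargas–Sheats.) -/
/-!
Write `monicPoly F d c ^ k` as a product over the base-`p` digits of `k` and expand by the
multinomial theorem. Summing over `c`, and using that `∑ y : F, y ^ m` is nonzero exactly when
`m > 0` and `q - 1 ∣ m`, the power sum becomes a sum of nonzero multiples of monomials, one for each
element `m` of `U_d(k)`, of degree `d * k - cost m` with `cost m = ∑ i < d, (d - i) * m_{i+1}`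
(`powerSum_eq`, `termExp_add_binCost`). So a nonzero power sum gives an element of `U_d(k)`.
Conversely it suffices that a nonempty `U_d(k)` has a *unique* element of least cost, since its
monomial then cannot cancel (`exists_unique_min`).

For uniqueness, regard a digit of `k` at position `j` as so many units of cost `p ^ j`, and sort the
positions by their class modulo `f`. A number is divisible by `q - 1` if and only if its class sums
have the form `c ↦ p * h (c + 1) - h c` for an integral function `h` on `ZMod f`, called a path
here. The partial sums `m_1 + ⋯ + m_{t+1}` of an element of `U_d(k)` give a strictly increasing
family of paths, and the cost is at least the sum over the family of the least costs of sets of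
units with the prescribed class sums (`Valid.exists_adm`). So one minimizes this sum over all
admissible families (`Adm`).

This cost is submodular (`UnitData.pathCost_inf_sup`), because the cost is convex in each class and
a path enters each class sum only through two neighbouring values. Moreover no member of an optimal
family can be replaced by a smaller path that is not more expensive (`UnitData.lower`); this uses
that at most `p - 1` units share a position. Together these show that the optimal family is unique
(`UnitData.unique`). An exchange argument based on uniqueness shows that its class sums are nested
(`UnitData.chain`), so the cheapest digits realizing them are nested as well, and their successive
differences form the element of `U_d(k)` of least cost.
-/

open Polynomial

open scoped Classical

namespace PowerSumAux

/-! ### Paths, their costs, and submodularity -/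

/-- A supply of units: the `r`-th cheapest unit of class `c` sits at the digit position `pos c r` and
costs `p ^ pos c r`. Positions increase within a class, at most `p - 1` units share a position
(`gap`), and a position determines its class (`cls`). -/
structure UnitData (p : ℕ) {f : ℕ} (pos : ZMod f → ℕ → ℕ) : Prop where
  two_le : 2 ≤ p
  mono : ∀ c, Monotone (pos c)
  gap : ∀ c r, pos c r < pos c (r + (p - 1))
  cls : ∀ c c' r r', pos c r = pos c' r' → c = c'

/-- The class sums attached to a path `h : ZMod f → ℤ`. If the digits of `n` have class sums
`vec p h`, then `n ≡ (p ^ f - 1) * h 0` modulo `p ^ f - 1`, and every multiple of `p ^ f - 1`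
arises from such a path. -/
def vec (p : ℕ) {f : ℕ} (h : ZMod f → ℤ) (c : ZMod f) : ℤ := p * h (c + 1) - h c

/-- The cost of the `v` cheapest units of class `c`; a negative `v` costs nothing. -/
def cst (p : ℕ) {f : ℕ} (pos : ZMod f → ℕ → ℕ) (c : ZMod f) (v : ℤ) : ℕ :=
  ∑ r ∈ Finset.range v.toNat, p ^ pos c r

/-- The least cost of a set of units with class sums `vec p h`. -/
noncomputable def pathCost (p : ℕ) {f : ℕ} [NeZero f] (pos : ZMod f → ℕ → ℕ)
    (h : ZMod f → ℤ) : ℕ := ∑ c, cst p pos c (vec p h c)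

section
variable {p f : ℕ} {pos : ZMod f → ℕ → ℕ}

/-- Distinct units below position `J` cost less than `p ^ J`, as in the expansion in base `p`. -/
lemma UnitData.sum_lt (H : UnitData p pos) (J : ℕ) :
    ∀ A : Finset (ZMod f × ℕ), (∀ x ∈ A, pos x.1 x.2 < J) →
      ∑ x ∈ A, p ^ pos x.1 x.2 < p ^ J := by
  induction J with
  | zero =>
    intro A hA
    have : A = ∅ := Finset.eq_empty_of_forall_notMem fun x hx => by
      have := hA x hx; omega
    simp [this]
  | succ J ih =>
    intro A hA
    have h2 := H.two_le
    rw [← Finset.sum_filter_add_sum_filter_not A (fun x => pos x.1 x.2 < J)]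
    have h1 := ih (A.filter fun x => pos x.1 x.2 < J) (by simp)
    set B := A.filter fun x => ¬ pos x.1 x.2 < J with hB
    have hBpos : ∀ x ∈ B, pos x.1 x.2 = J := by
      intro x hx
      rw [hB, Finset.mem_filter] at hx
      have := hA x hx.1
      omega
    have hsum : ∑ x ∈ B, p ^ pos x.1 x.2 = B.card * p ^ J := by
      rw [Finset.sum_congr rfl fun x hx => by rw [hBpos x hx]]
      simp
    have hcard : B.card ≤ p - 1 := by
      rcases B.eq_empty_or_nonempty with h0 | hne
      · simp [h0]
      · obtain ⟨x, hx, hmin⟩ := B.exists_min_image (fun x => x.2) hne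
        have hinj : Set.InjOn (fun y : ZMod f × ℕ => y.2) (B : Set (ZMod f × ℕ)) := by
          intro y hy z hz hyz
          exact Prod.ext (H.cls _ _ _ _ ((hBpos y hy).trans (hBpos z hz).symm)) hyz
        have hsub : B.image (fun y => y.2) ⊆ Finset.Ico x.2 (x.2 + (p - 1)) := by
          intro r hr
          obtain ⟨y, hy, rfl⟩ := Finset.mem_image.1 hr
          rw [Finset.mem_Ico]
          refine ⟨hmin y hy, ?_⟩
          by_contra hcon
          have hc : y.1 = x.1 := H.cls _ _ _ _ ((hBpos y hy).trans (hBpos x hx).symm)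
          have h3 := H.gap x.1 x.2
          have h4 := H.mono x.1 (not_lt.1 hcon)
          have h5 := hBpos y hy
          rw [hc] at h5
          have h6 := hBpos x hx
          omega
        have := Finset.card_le_card hsub
        rw [Finset.card_image_of_injOn hinj] at this
        simpa using this
    rw [hsum]
    have h3 : B.card * p ^ J ≤ (p - 1) * p ^ J := Nat.mul_le_mul_right _ hcard
    have h4 : p ^ (J + 1) = p ^ J + (p - 1) * p ^ J := by
      obtain ⟨n, rfl⟩ : ∃ n, p = n + 1 := ⟨p - 1, by omega⟩
      simp only [Nat.add_sub_cancel]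
      ring
    omega

lemma cst_of_nonpos (c : ZMod f) {v : ℤ} (hv : v ≤ 0) : cst p pos c v = 0 := by
  simp [cst, Int.toNat_of_nonpos hv]

lemma cst_succ (c : ZMod f) {v : ℤ} (hv : 0 ≤ v) :
    cst p pos c (v + 1) = cst p pos c v + p ^ pos c v.toNat := by
  obtain ⟨n, rfl⟩ := Int.eq_ofNat_of_zero_le hv
  have : ((n : ℤ) + 1).toNat = n + 1 := by omega
  simp [cst, this, Finset.sum_range_succ]

lemma cst_mono (c : ZMod f) {v w : ℤ} (h : v ≤ w) : cst p pos c v ≤ cst p pos c w :=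
  Finset.sum_le_sum_of_subset (by
    intro r hr
    simp only [Finset.mem_range] at *
    omega)

lemma UnitData.cst_step (H : UnitData p pos) (c : ZMod f) {a b : ℤ} (h : a ≤ b) :
    cst p pos c (a + 1) + cst p pos c b ≤ cst p pos c a + cst p pos c (b + 1) := by
  rcases lt_or_ge a 0 with ha | ha
  · rw [cst_of_nonpos c (show a + 1 ≤ 0 by omega), cst_of_nonpos c ha.le]
    have := cst_mono (p := p) (pos := pos) c (show b ≤ b + 1 by omega)
    omega
  · rw [cst_succ c ha, cst_succ c (ha.trans h)]
    have h1 : pos c a.toNat ≤ pos c b.toNat := H.mono c (by omega)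
    have := Nat.pow_le_pow_right (show 0 < p by have := H.two_le; omega) h1
    omega

lemma UnitData.cst_shift (H : UnitData p pos) (c : ZMod f) {a b : ℤ} (h : a ≤ b) (t : ℕ) :
    cst p pos c (a + t) + cst p pos c b ≤ cst p pos c a + cst p pos c (b + t) := by
  induction t with
  | zero => simp
  | succ t ih =>
    have := H.cst_step c (show a + t ≤ b + t by omega)
    push_cast
    rw [← add_assoc, ← add_assoc]
    omega

/-- Convexity of the cost within a class: moving two amounts towards each other, with a fixed
sum, does not increase the total cost. -/
lemma UnitData.cst_between (H : UnitData p pos) (c : ZMod f) {a b b' e : ℤ} (h : a ≤ b)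
    (h' : a ≤ b') (hs : a + e = b + b') :
    cst p pos c b + cst p pos c b' ≤ cst p pos c a + cst p pos c e := by
  have := H.cst_shift c h' (b - a).toNat
  have h1 : ((b - a).toNat : ℤ) = b - a := Int.toNat_of_nonneg (by omega)
  rw [h1, show a + (b - a) = b by ring, show b' + (b - a) = e by omega] at this
  exact this

/-- Bounds on the class sums pass to infima and suprema of paths. -/
lemma vec_inf_mem {x y : ZMod f → ℤ} {c : ZMod f} {lo hi : ℤ}
    (hx : lo ≤ vec p x c ∧ vec p x c ≤ hi) (hy : lo ≤ vec p y c ∧ vec p y c ≤ hi) :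
    (lo ≤ vec p (x ⊓ y) c ∧ vec p (x ⊓ y) c ≤ hi) ∧
      (lo ≤ vec p (x ⊔ y) c ∧ vec p (x ⊔ y) c ≤ hi) := by
  have hp : (0 : ℤ) ≤ p := by positivity
  simp only [vec] at *
  rcases le_total (x c) (y c) with h1 | h1 <;> rcases le_total (x (c + 1)) (y (c + 1)) with h2 | h2 <;>
  · have h3 := mul_le_mul_of_nonneg_left h2 hp
    simp only [Pi.inf_apply, Pi.sup_apply, inf_of_le_left, inf_of_le_right,
      sup_of_le_right, sup_of_le_left, h1, h2]
    omega

/-- Telescoping recovers a path from its class sums. -/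
lemma sum_vec (h : ZMod f → ℤ) (c : ZMod f) :
    ∑ r ∈ Finset.range f, (p : ℤ) ^ r * vec p h (c + r) = ((p : ℤ) ^ f - 1) * h c := by
  have := Finset.sum_range_sub (fun r : ℕ => (p : ℤ) ^ r * h (c + r)) f
  simp only [pow_zero, Nat.cast_zero, add_zero, one_mul, CharP.cast_eq_zero] at this
  rw [sub_mul, one_mul, ← this]
  refine Finset.sum_congr rfl fun r _ => ?_
  simp only [vec]
  push_cast
  rw [pow_succ, ← add_assoc]
  ring

variable [NeZero f]

/-- The cost of a path is submodular on the lattice of paths. -/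
lemma UnitData.pathCost_inf_sup (H : UnitData p pos) (x y : ZMod f → ℤ) :
    pathCost p pos (x ⊓ y) + pathCost p pos (x ⊔ y) ≤ pathCost p pos x + pathCost p pos y := by
  unfold pathCost
  rw [← Finset.sum_add_distrib, ← Finset.sum_add_distrib]
  refine Finset.sum_le_sum fun c _ => ?_
  have hp : (0 : ℤ) ≤ p := by positivity
  rcases le_total (x c) (y c) with h1 | h1 <;> rcases le_total (x (c + 1)) (y (c + 1)) with h2 | h2
  · simp [vec, h1, h2]
  · have h3 := mul_le_mul_of_nonneg_left h2 hp
    simp only [vec, Pi.inf_apply, Pi.sup_apply, inf_of_le_left h1, inf_of_le_right h2,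
      sup_of_le_right h1, sup_of_le_left h2]
    rw [add_comm (cst p pos c (p * x (c + 1) - x c))]
    exact H.cst_between c (by omega) (by omega) (by ring)
  · have h3 := mul_le_mul_of_nonneg_left h2 hp
    simp only [vec, Pi.inf_apply, Pi.sup_apply, inf_of_le_right h1, inf_of_le_left h2,
      sup_of_le_left h1, sup_of_le_right h2]
    exact H.cst_between c (by omega) (by omega) (by ring)
  · simp [vec, h1, h2, add_comm]

lemma vec_injective (hp : 2 ≤ p) {x y : ZMod f → ℤ} (h : ∀ c, vec p x c = vec p y c) : x = y := by
  funext c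
  have h1 := sum_vec (p := p) x c
  rw [Finset.sum_congr rfl fun r _ => by rw [h], sum_vec] at h1
  have h2 : (p : ℤ) ^ f - 1 ≠ 0 := by
    have : 1 < p ^ f := Nat.one_lt_pow (NeZero.ne f) hp
    have : (1 : ℤ) < (p : ℤ) ^ f := by exact_mod_cast this
    omega
  exact (mul_left_cancel₀ h2 h1).symm

end

/-! ### Lowering one path of an optimal family -/

section
variable {p f : ℕ} {pos : ZMod f → ℕ → ℕ}

lemma cst_add_Ico (c : ZMod f) {v w : ℤ} (h : v ≤ w) :
    cst p pos c w = cst p pos c v + ∑ r ∈ Finset.Ico v.toNat w.toNat, p ^ pos c r :=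
  (Finset.sum_range_add_sum_Ico _ (Int.toNat_le_toNat h)).symm

variable [NeZero f]

/-- If `x` costs at most as much as `g ≠ x`, then some class `s` in which `x` uses fewer units
than `g` has a last `g`-unit beyond every first unit that `x` uses in excess of `g`: otherwise the
most expensive excess unit of `x` would outweigh everything that `x` saves. -/
lemma UnitData.exists_gain (H : UnitData p pos) {x g : ZMod f → ℤ}
    (hg : ∀ c, 0 ≤ vec p g c)
    (hle : pathCost p pos x ≤ pathCost p pos g) (hne : x ≠ g) :
    ∃ s, vec p x s < vec p g s ∧ ∀ c, vec p g c < vec p x c →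
      pos c (vec p g c).toNat < pos s (vec p g s - 1).toNat := by
  by_cases hE : ∃ c, vec p g c < vec p x c
  swap
  · push Not at hE
    have : ∃ c, vec p x c ≠ vec p g c := by
      by_contra hcon
      push Not at hcon
      exact hne (vec_injective H.two_le hcon)
    obtain ⟨s, hs⟩ := this
    exact ⟨s, lt_of_le_of_ne (hE s) hs, fun c hc => absurd hc (not_lt.2 (hE c))⟩
  obtain ⟨c1, hc1⟩ := hE
  obtain ⟨c0, hc0, hmax⟩ := (Finset.univ.filter fun c => vec p g c < vec p x c).exists_max_image
    (fun c => pos c (vec p g c).toNat) ⟨c1, by simpa using hc1⟩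
  simp only [Finset.mem_filter, Finset.mem_univ, true_and] at hc0 hmax
  set J := pos c0 (vec p g c0).toNat with hJ
  by_contra hcon
  push Not at hcon
  have hlost : ∀ s, vec p x s < vec p g s → pos s (vec p g s - 1).toNat < J := by
    intro s hs
    obtain ⟨c, hc, hc'⟩ := hcon s hs
    refine lt_of_le_of_ne (hc'.trans (hmax c hc)) fun heq => ?_
    have := H.cls _ _ _ _ heq
    subst this
    omega
  set A : Finset (ZMod f × ℕ) := Finset.univ.biUnion fun c =>
    (Finset.Ico (vec p x c).toNat (vec p g c).toNat).image (Prod.mk c) with hA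
  have hAmem : ∀ y : ZMod f × ℕ, y ∈ A ↔ y.1 ∈ (Finset.univ : Finset (ZMod f)) ∧
      y.2 ∈ Finset.Ico (vec p x y.1).toNat (vec p g y.1).toNat := by
    rintro ⟨c, r⟩
    simp [hA]
  have hAlt := H.sum_lt J A (by
    rintro ⟨c, r⟩ hy
    rw [hAmem] at hy
    simp only [Finset.mem_univ, Finset.mem_Ico, true_and] at hy
    have h1 := hlost c (by omega)
    exact lt_of_le_of_lt (H.mono c (by omega)) h1)
  rw [Finset.sum_finset_product A Finset.univ
    (fun c => Finset.Ico (vec p x c).toNat (vec p g c).toNat) hAmem] at hAlt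
  simp only at hAlt
  have hkey : pathCost p pos g + p ^ J ≤ pathCost p pos x +
      ∑ c, ∑ r ∈ Finset.Ico (vec p x c).toNat (vec p g c).toNat, p ^ pos c r := by
    have hJs : p ^ J = ∑ c, if c = c0 then p ^ J else 0 := by simp
    rw [hJs]
    unfold pathCost
    rw [← Finset.sum_add_distrib, ← Finset.sum_add_distrib]
    refine Finset.sum_le_sum fun c _ => ?_
    rcases le_or_gt (vec p x c) (vec p g c) with h1 | h1
    · rw [if_neg (by rintro rfl; omega), cst_add_Ico c h1]
      simp
    · split_ifs with h2
      · subst h2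
        have h3 := cst_mono (p := p) (pos := pos) c (show vec p g c + 1 ≤ vec p x c by omega)
        rw [cst_succ c (hg c), ← hJ] at h3
        omega
      · have h3 := cst_mono (p := p) (pos := pos) c h1.le
        omega
  omega

end

/-- Admissible families of `d` paths, indexed by `i < d` (other indices are ignored): strictly
increasing in `i`, the `i`-th path being at least `i + 1`, with class sums at most the caps `N`.
Negative class sums are allowed. -/
structure Adm (p d : ℕ) {f : ℕ} (N : ZMod f → ℤ) (h : ℕ → ZMod f → ℤ) : Prop where
  base : ∀ i < d, ∀ c, (i : ℤ) + 1 ≤ h i c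
  step : ∀ i, i + 1 < d → ∀ c, h i c + 1 ≤ h (i + 1) c
  cap : ∀ i < d, ∀ c, vec p (h i) c ≤ N c

/-- The total cost of the first `d` paths of a family. -/
noncomputable def famCost (p : ℕ) {f : ℕ} [NeZero f] (pos : ZMod f → ℕ → ℕ) (d : ℕ)
    (h : ℕ → ZMod f → ℤ) : ℕ := ∑ i ∈ Finset.range d, pathCost p pos (h i)

section
variable {p f d : ℕ} {pos : ZMod f → ℕ → ℕ} {N : ZMod f → ℤ}

lemma Adm.le_sub {h : ℕ → ZMod f → ℤ} (hh : Adm p d N h) {i m : ℕ} (him : i ≤ m) (hm : m < d)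
    (c : ZMod f) : h i c + (m - i : ℤ) ≤ h m c := by
  induction m, him using Nat.le_induction with
  | base => simp
  | succ m him ih =>
    have h1 := ih (by omega)
    have h2 := hh.step m hm c
    push_cast
    omega

variable [NeZero f]

/-- No member `g m` of an optimal family can be replaced by a smaller path `x` that is not more
expensive. If it could, lower `g m` by one where `x c < g m c`, and lower the members below `g m`
where strict increase forces it. The units gained are distinct and all lie below the position of
some unit lost by `g m`, so the cost drops. -/
lemma UnitData.lower (H : UnitData p pos) {g : ℕ → ZMod f → ℤ} (hg : Adm p d N g)
    (hmin : ∀ h, Adm p d N h → famCost p pos d g ≤ famCost p pos d h)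
    (hg0 : ∀ i < d, ∀ c, 0 ≤ vec p (g i) c) {m : ℕ} (hm : m < d) {x : ZMod f → ℤ}
    (hx0 : ∀ c, 0 ≤ vec p x c) (hxN : ∀ c, vec p x c ≤ N c) (hx1 : ∀ c, (m : ℤ) + 1 ≤ x c)
    (hxg : ∀ c, x c ≤ g m c) (hcost : pathCost p pos x ≤ pathCost p pos (g m)) : x = g m := by
  by_contra hne
  obtain ⟨s, hs, hsmax⟩ := H.exists_gain (hg0 m hm) hcost hne
  have hp2 := H.two_le
  have hpz : (2 : ℤ) ≤ p := by exact_mod_cast hp2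
  -- `T i c`: strict increase forces `g i c` down when `g m c` is lowered by one
  set T : ℕ → ZMod f → Prop := fun i c => i ≤ m ∧ x c < g m c ∧ g i c = g m c - (m - i : ℤ) with hT
  set e : ℕ → ZMod f → ℤ := fun i c => if T i c then g i c - 1 else g i c with he
  have heT : ∀ i c, T i c → e i c = g i c - 1 := fun i c h => if_pos h
  have heF : ∀ i c, ¬ T i c → e i c = g i c := fun i c h => if_neg h
  have hTm : ∀ c, x c < g m c → T m c := fun c h => ⟨le_rfl, h, by simp⟩
  have hsS : x (s + 1) < g m (s + 1) := by
    refine lt_of_le_of_ne (hxg _) fun heq => ?_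
    have := hxg s
    simp only [vec, heq] at hs
    omega
  obtain ⟨c0, hc0, hc0max⟩ := (Finset.univ.filter fun c => x (c + 1) < g m (c + 1) ∧
      1 ≤ vec p (g m) c).exists_max_image (fun c => pos c (vec p (g m) c - 1).toNat)
      ⟨s, by simpa using ⟨hsS, by have := hx0 s; omega⟩⟩
  simp only [Finset.mem_filter, Finset.mem_univ, true_and] at hc0 hc0max
  set J := pos c0 (vec p (g m) c0 - 1).toNat with hJ
  have hsJ := hc0max s ⟨hsS, by have := hx0 s; omega⟩
  -- a unit is gained only at the boundary of `T i`; it is available and lies below position `J`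
  have hgain : ∀ i c, T i c → ¬ T i (c + 1) →
      vec p (g i) c + 1 ≤ N c ∧ pos c (vec p (g i) c).toNat < J := by
    intro i c hTc hTc1
    obtain ⟨him, hxc, hgi⟩ := hTc
    have hid : i < d := lt_of_le_of_lt him hm
    have hV0 := hg0 i hid c
    have hle := hg.le_sub him hm (c + 1)
    have hdiff : vec p (g m) c - vec p (g i) c
        = p * (g m (c + 1) - g i (c + 1)) - (m - i : ℤ) := by
      simp only [vec, hgi]; ring
    have him' : (i : ℤ) ≤ m := by exact_mod_cast him
    by_cases hS : x (c + 1) < g m (c + 1)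
    · have hneq : g i (c + 1) ≠ g m (c + 1) - (m - i : ℤ) := fun hh => hTc1 ⟨him, hS, hh⟩
      have hge : (m - i : ℤ) + 1 ≤ g m (c + 1) - g i (c + 1) := by omega
      have him2 : (1 : ℤ) ≤ m - i := by
        by_contra hlt
        have : (m : ℤ) = i := by omega
        have : m = i := by exact_mod_cast this
        subst this
        simp at hneq
      have h2 : (p : ℤ) ≤ vec p (g m) c - vec p (g i) c := by
        rw [hdiff]; nlinarith
      refine ⟨by have := hg.cap m hm c; omega, ?_⟩
      have h3 := H.gap c (vec p (g i) c).toNat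
      have h4 := hc0max c ⟨hS, by omega⟩
      exact (h3.trans_le (H.mono c (by omega))).trans_le h4
    · have hxe : x (c + 1) = g m (c + 1) := le_antisymm (hxg _) (not_lt.1 hS)
      have h2 : 0 ≤ vec p (g m) c - vec p (g i) c := by
        rw [hdiff]; nlinarith
      have h3 : vec p (g m) c < vec p x c := by simp only [vec, hxe]; omega
      refine ⟨by have := hxN c; omega, ?_⟩
      exact ((H.mono c (by omega)).trans_lt (hsmax c h3)).trans_le hsJ
  have hvec : ∀ i c, vec p (e i) c ≤ vec p (g i) c ∨
      (T i c ∧ ¬ T i (c + 1)) ∧ vec p (e i) c = vec p (g i) c + 1 := by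
    intro i c
    by_cases h1 : T i c <;> by_cases h2 : T i (c + 1)
    · left; simp only [vec, heT _ _ h1, heT _ _ h2]; nlinarith
    · right; refine ⟨⟨h1, h2⟩, ?_⟩; simp only [vec, heT _ _ h1, heF _ _ h2]; ring
    · left; simp only [vec, heF _ _ h1, heT _ _ h2]; nlinarith
    · left; simp only [vec, heF _ _ h1, heF _ _ h2]; rfl
  have hadm : Adm p d N e := by
    refine ⟨fun i hi c => ?_, fun i hi c => ?_, fun i hi c => ?_⟩
    · by_cases h1 : T i c
      · rw [heT _ _ h1]
        obtain ⟨_, hxc, hgi⟩ := h1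
        have := hx1 c
        omega
      · rw [heF _ _ h1]; exact hg.base i hi c
    · have hst := hg.step i hi c
      by_cases h1 : T (i + 1) c
      · rw [heT _ _ h1]
        by_cases h2 : T i c
        · rw [heT _ _ h2]; omega
        · rw [heF _ _ h2]
          obtain ⟨h3, hxc, hgi⟩ := h1
          have : g i c ≠ g m c - (m - i : ℤ) := fun hh => h2 ⟨by omega, hxc, hh⟩
          push_cast at hgi
          omega
      · rw [heF _ _ h1]
        by_cases h2 : T i c
        · rw [heT _ _ h2]; omega
        · rw [heF _ _ h2]; omega
    · rcases hvec i c with h1 | ⟨⟨h1, h2⟩, h3⟩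
      · exact h1.trans (hg.cap i hi c)
      · rw [h3]; exact (hgain i c h1 h2).1
  set Q := Finset.range d ×ˢ (Finset.univ : Finset (ZMod f)) with hQ
  set G := Q.filter fun y => T y.1 y.2 ∧ ¬ T y.1 (y.2 + 1) with hG
  have hfam : ∀ h : ℕ → ZMod f → ℤ, famCost p pos d h = ∑ y ∈ Q, cst p pos y.2 (vec p (h y.1) y.2) := by
    intro h
    rw [hQ, Finset.sum_product]
    rfl
  have hGlt : ∑ y ∈ G, p ^ pos y.2 (vec p (g y.1) y.2).toNat < p ^ J := by
    have hinj : Set.InjOn (fun y : ℕ × ZMod f => (y.2, (vec p (g y.1) y.2).toNat)) (G : Set _) := by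
      have aux : ∀ i i' c, i < i' → (i, c) ∈ G → (i', c) ∈ G →
          (vec p (g i) c).toNat ≠ (vec p (g i') c).toNat := by
        intro i i' c hlt hi hi'
        simp only [hG, hQ, Finset.mem_filter, Finset.mem_product, Finset.mem_range,
          Finset.mem_univ, and_true] at hi hi'
        have h1 := hg.le_sub hlt.le hi'.1 (c + 1)
        have h2 := hi.2.1.2.2
        have h3 := hi'.2.1.2.2
        have h4 : (i : ℤ) + 1 ≤ i' := by exact_mod_cast hlt
        have h5 := hg0 i hi.1 c
        have h6 : vec p (g i) c < vec p (g i') c := by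
          simp only [vec, h2, h3]
          nlinarith
        omega
      rintro ⟨i, c⟩ hi ⟨i', c'⟩ hi' heq
      simp only [Prod.mk.injEq] at heq
      obtain ⟨rfl, heq⟩ := heq
      rcases lt_trichotomy i i' with hlt | rfl | hlt
      · exact absurd heq (aux _ _ _ hlt hi hi')
      · rfl
      · exact absurd heq.symm (aux _ _ _ hlt hi' hi)
    have := H.sum_lt J (G.image fun y : ℕ × ZMod f => (y.2, (vec p (g y.1) y.2).toNat)) (by
      intro z hz
      obtain ⟨y, hy, rfl⟩ := Finset.mem_image.1 hz
      rw [hG, Finset.mem_filter] at hy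
      exact (hgain _ _ hy.2.1 hy.2.2).2)
    rwa [Finset.sum_image hinj] at this
  have hcmp : famCost p pos d e + p ^ J ≤ famCost p pos d g +
      ∑ y ∈ G, p ^ pos y.2 (vec p (g y.1) y.2).toNat := by
    have hJs : p ^ J = ∑ y ∈ Q, if y = (m, c0) then p ^ J else 0 := by
      rw [Finset.sum_ite_eq', if_pos (by simp [hQ, hm])]
    rw [hJs, hfam, hfam, hG, Finset.sum_filter, ← Finset.sum_add_distrib,
      ← Finset.sum_add_distrib]
    refine Finset.sum_le_sum ?_
    rintro ⟨i, c⟩ hy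
    have hi : i < d := by simpa [hQ] using hy
    by_cases hy0 : (i, c) = (m, c0)
    · obtain ⟨rfl, rfl⟩ := Prod.mk.inj hy0
      rw [if_pos rfl, if_neg (fun hh => hh.2 (hTm _ hc0.1))]
      have h1 : vec p (e i) c ≤ vec p (g i) c - 1 := by
        have h2 := heT i (c + 1) (hTm _ hc0.1)
        by_cases h3 : T i c
        · simp only [vec, h2, heT _ _ h3]; nlinarith
        · simp only [vec, h2, heF _ _ h3]; nlinarith
      have h2 := cst_mono (p := p) (pos := pos) c h1
      have h3 := cst_succ (p := p) (pos := pos) c (v := vec p (g i) c - 1) (by omega)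
      rw [sub_add_cancel, ← hJ] at h3
      simp only
      omega
    · rw [if_neg hy0]
      rcases hvec i c with h1 | ⟨h1, h3⟩
      · have := cst_mono (p := p) (pos := pos) c h1
        simp only
        omega
      · rw [if_pos h1]
        simp only [h3]
        rw [cst_succ c (hg0 i hi c)]
        omega
  have := hmin e hadm
  omega

end

/-! ### The optimal family: uniqueness, nonnegativity, nestedness -/

lemma exists_min_nat {α : Type*} (P : α → Prop) (w : α → ℕ) (h : ∃ a, P a) :
    ∃ a, P a ∧ ∀ b, P b → w a ≤ w b := by
  have h' : ∃ n a, P a ∧ w a = n := by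
    obtain ⟨a, ha⟩ := h
    exact ⟨_, a, ha, rfl⟩
  obtain ⟨a, ha, hw⟩ := Nat.find_spec h'
  exact ⟨a, ha, fun b hb => hw ▸ Nat.find_min' h' ⟨b, hb, rfl⟩⟩

section
variable {p f d : ℕ} {pos : ZMod f → ℕ → ℕ} {N : ZMod f → ℤ}

lemma Adm.inf {x y : ℕ → ZMod f → ℤ} (hx : Adm p d N x) (hy : Adm p d N y) :
    Adm p d N (x ⊓ y) := by
  refine ⟨fun i hi c => le_inf (hx.base i hi c) (hy.base i hi c), fun i hi c => ?_,
    fun i hi c => ?_⟩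
  · have h1 := hx.step i hi c
    have h2 := hy.step i hi c
    simp only [Pi.inf_apply]
    omega
  · exact (vec_inf_mem (lo := min (vec p (x i) c) (vec p (y i) c))
      ⟨inf_le_left, hx.cap i hi c⟩ ⟨inf_le_right, hy.cap i hi c⟩).1.2

lemma Adm.sup {x y : ℕ → ZMod f → ℤ} (hx : Adm p d N x) (hy : Adm p d N y) :
    Adm p d N (x ⊔ y) := by
  refine ⟨fun i hi c => (hx.base i hi c).trans le_sup_left, fun i hi c => ?_,
    fun i hi c => ?_⟩
  · have h1 := hx.step i hi c
    have h2 := hy.step i hi c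
    simp only [Pi.sup_apply]
    omega
  · exact (vec_inf_mem (lo := min (vec p (x i) c) (vec p (y i) c))
      ⟨inf_le_left, hx.cap i hi c⟩ ⟨inf_le_right, hy.cap i hi c⟩).2.2

variable [NeZero f]

/-- An optimal family lying below another one equals it: each member costs at least as much by
`UnitData.lower`, and the total costs agree. -/
lemma UnitData.eq_of_le (H : UnitData p pos) {e g : ℕ → ZMod f → ℤ} (hg : Adm p d N g)
    (hmin : ∀ h, Adm p d N h → famCost p pos d g ≤ famCost p pos d h)
    (hg0 : ∀ i < d, ∀ c, 0 ≤ vec p (g i) c) (he : Adm p d N e)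
    (he0 : ∀ i < d, ∀ c, 0 ≤ vec p (e i) c) (hle : ∀ i c, e i c ≤ g i c)
    (hcost : famCost p pos d e ≤ famCost p pos d g) : ∀ i < d, e i = g i := by
  have hlow : ∀ m < d, pathCost p pos (e m) ≤ pathCost p pos (g m) → e m = g m := fun m hm hc =>
    H.lower hg hmin hg0 hm (he0 m hm) (he.cap m hm) (he.base m hm) (hle m) hc
  have hge : ∀ m ∈ Finset.range d, pathCost p pos (g m) ≤ pathCost p pos (e m) := by
    intro m hm
    by_contra hcon
    have := hlow m (Finset.mem_range.1 hm) (not_le.1 hcon).le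
    rw [this] at hcon
    exact hcon le_rfl
  have heq := (Finset.sum_eq_sum_iff_of_le hge).1
    (le_antisymm (Finset.sum_le_sum hge) hcost)
  exact fun i hi => hlow i hi (heq i (Finset.mem_range.2 hi)).ge

/-- The optimal family with nonnegative class sums is unique, as two of them both agree with their
infimum, which is optimal by submodularity. -/
lemma UnitData.unique (H : UnitData p pos) {a g : ℕ → ZMod f → ℤ} (ha : Adm p d N a)
    (hg : Adm p d N g)
    (hmin : ∀ h, Adm p d N h → famCost p pos d g ≤ famCost p pos d h)
    (ha0 : ∀ i < d, ∀ c, 0 ≤ vec p (a i) c) (hg0 : ∀ i < d, ∀ c, 0 ≤ vec p (g i) c)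
    (hcost : famCost p pos d a ≤ famCost p pos d g) : ∀ i < d, a i = g i := by
  have hsub : famCost p pos d (a ⊓ g) + famCost p pos d (a ⊔ g)
      ≤ famCost p pos d a + famCost p pos d g := by
    unfold famCost
    rw [← Finset.sum_add_distrib, ← Finset.sum_add_distrib]
    exact Finset.sum_le_sum fun i _ => H.pathCost_inf_sup (a i) (g i)
  have h1 := hmin _ (ha.inf hg)
  have h2 := hmin _ (ha.sup hg)
  have h3 := hmin _ ha
  have hmin' : ∀ h, Adm p d N h → famCost p pos d a ≤ famCost p pos d h := fun h hh =>
    hcost.trans (hmin h hh)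
  have he0 : ∀ i < d, ∀ c, 0 ≤ vec p ((a ⊓ g) i) c := fun i hi c =>
    (vec_inf_mem ⟨ha0 i hi c, ha.cap i hi c⟩ ⟨hg0 i hi c, hg.cap i hi c⟩).1.1
  intro i hi
  rw [← H.eq_of_le hg hmin hg0 (ha.inf hg) he0 (fun i c => inf_le_right) (by omega) i hi,
    ← H.eq_of_le ha hmin' ha0 (ha.inf hg) he0 (fun i c => inf_le_left) (by omega) i hi]

/-- Among the optimal families, one with the least sum of entries has nonnegative class sums:
replacing `h i c` by `min (h i c) (p * h i (c + 1))` keeps optimality and decreases an entry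
where a class sum is negative. -/
lemma UnitData.exists_nonneg_min (H : UnitData p pos) (hN : ∀ c, 0 ≤ N c)
    (hex : ∃ h, Adm p d N h) :
    ∃ h, Adm p d N h ∧ (∀ g, Adm p d N g → famCost p pos d h ≤ famCost p pos d g) ∧
      ∀ i < d, ∀ c, 0 ≤ vec p (h i) c := by
  obtain ⟨g, hg, hgmin⟩ := exists_min_nat _ (famCost p pos d) hex
  obtain ⟨h, ⟨hh, hhc⟩, hhmin⟩ := exists_min_nat
    (fun h => Adm p d N h ∧ famCost p pos d h ≤ famCost p pos d g)
    (fun h => (∑ i ∈ Finset.range d, ∑ c, h i c).toNat) ⟨g, hg, le_rfl⟩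
  refine ⟨h, hh, fun g' hg' => hhc.trans (hgmin g' hg'), ?_⟩
  by_contra hcon
  push Not at hcon
  obtain ⟨i0, hi0, c0, hneg⟩ := hcon
  have hpz : (2 : ℤ) ≤ p := by exact_mod_cast H.two_le
  set e : ℕ → ZMod f → ℤ := fun i c => min (h i c) (p * h i (c + 1)) with he
  have hvec : ∀ i c, vec p (e i) c ≤ max (vec p (h i) c) 0 := by
    intro i c
    have h1 : e i (c + 1) ≤ h i (c + 1) := min_le_left _ _
    have h2 : (p : ℤ) * e i (c + 1) ≤ p * h i (c + 1) := by nlinarith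
    have h3 : e i c = min (h i c) (p * h i (c + 1)) := rfl
    simp only [vec]
    omega
  have hadm : Adm p d N e := by
    refine ⟨fun i hi c => ?_, fun i hi c => ?_, fun i hi c => ?_⟩
    · have h1 := hh.base i hi c
      have h2 := hh.base i hi (c + 1)
      exact le_min h1 (by nlinarith)
    · have h1 := hh.step i hi c
      have h2 := hh.step i hi (c + 1)
      have h3 : (p : ℤ) * h i (c + 1) + 1 ≤ p * h (i + 1) (c + 1) := by nlinarith
      simp only [he]
      omega
    · exact (hvec i c).trans (max_le (hh.cap i hi c) (hN c))
  have hcost : famCost p pos d e ≤ famCost p pos d h := by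
    refine Finset.sum_le_sum fun i _ => Finset.sum_le_sum fun c _ => ?_
    refine (cst_mono c (hvec i c)).trans ?_
    rcases le_total (vec p (h i) c) 0 with h1 | h1
    · rw [max_eq_right h1, cst_of_nonpos c le_rfl]; exact Nat.zero_le _
    · rw [max_eq_left h1]
  have hlt : ∑ i ∈ Finset.range d, ∑ c, e i c < ∑ i ∈ Finset.range d, ∑ c, h i c := by
    refine Finset.sum_lt_sum (fun i _ => Finset.sum_le_sum fun c _ => min_le_left _ _)
      ⟨i0, Finset.mem_range.2 hi0, Finset.sum_lt_sum (fun c _ => min_le_left _ _)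
        ⟨c0, Finset.mem_univ _, ?_⟩⟩
    simp only [vec] at hneg
    exact min_lt_iff.2 (Or.inr (by omega))
  have hnn : 0 ≤ ∑ i ∈ Finset.range d, ∑ c, e i c :=
    Finset.sum_nonneg fun i hi => Finset.sum_nonneg fun c _ => by
      have := hadm.base i (Finset.mem_range.1 hi) c
      omega
  have := hhmin e ⟨hadm, hcost.trans hhc⟩
  omega

/-- If the class sums of a positive path `δ` are negative at `c0`, then a smaller path `η`, with
`η c0 = 1` and `2 * η + 1 ≤ δ`, has all its class sums between `0` and those of `δ`. A minimal
solution of the constraints away from `c0` is tight wherever it is positive, and following the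
recursion backwards from `c0` shows that it stays far below `δ`. -/
lemma exists_exchange (hp : 2 ≤ p) {δ : ZMod f → ℤ} (hδ : ∀ c, 1 ≤ δ c) {c0 : ZMod f}
    (hneg : vec p δ c0 < 0) :
    ∃ η : ZMod f → ℤ, (∀ c, 0 ≤ η c) ∧ η c0 = 1 ∧ (∀ c, 2 * η c + 1 ≤ δ c) ∧
      ∀ c, min (vec p δ c) 0 ≤ vec p η c ∧ vec p η c ≤ max (vec p δ c) 0 := by
  have hpz : (2 : ℤ) ≤ p := by exact_mod_cast hp
  obtain ⟨η, ⟨h0, hle, h1, hv⟩, hmin⟩ := exists_min_nat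
    (fun η : ZMod f → ℤ => (∀ c, 0 ≤ η c) ∧ (∀ c, η c ≤ δ c) ∧ 1 ≤ η c0 ∧
      ∀ c, c ≠ c0 → vec p η c ≤ max (vec p δ c) 0) (fun η => (∑ c, η c).toNat)
    ⟨δ, fun c => by have := hδ c; omega, fun c => le_rfl, hδ c0, fun c _ => le_max_left _ _⟩
  -- lowering one coordinate must violate a constraint
  have hdec : ∀ b, 0 < η b → (b = c0 → 2 ≤ η c0) →
      (b ≠ c0 → vec p η b < max (vec p δ b) 0) → False := by
    intro b hb hb0 hb1
    set η' := Function.update η b (η b - 1) with hη'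
    have hb' : η' b = η b - 1 := by simp [hη']
    have hne : ∀ c, c ≠ b → η' c = η c := fun c hc => by simp [hη', hc]
    have hle' : ∀ c, η' c ≤ η c := by
      intro c
      by_cases hc : c = b
      · subst hc; omega
      · rw [hne c hc]
    have hsum : ∑ c, η' c < ∑ c, η c :=
      Finset.sum_lt_sum (fun c _ => hle' c) ⟨b, Finset.mem_univ _, by omega⟩
    have hnn' : ∀ c, 0 ≤ η' c := by
      intro c
      by_cases hc : c = b
      · subst hc; omega
      · rw [hne c hc]; exact h0 c
    have hs0 : 0 ≤ ∑ c, η' c := Finset.sum_nonneg fun c _ => hnn' c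
    have := hmin η' ⟨hnn', fun c => (hle' c).trans (hle c), ?_, ?_⟩
    · omega
    · by_cases hc : c0 = b
      · rw [hc, hb']; have := hb0 hc.symm; rw [hc] at this; omega
      · rw [hne _ hc]; exact h1
    · intro c hc
      have h2 : (p : ℤ) * η' (c + 1) ≤ p * η (c + 1) := by nlinarith [hle' (c + 1)]
      by_cases hcb : c = b
      · subst hcb
        have := hb1 hc
        simp only [vec] at this ⊢
        omega
      · have := hv c hc
        simp only [vec, hne c hcb] at this ⊢
        omega
  have hη1 : η c0 = 1 := by
    by_contra hcon
    exact hdec c0 (by omega) (fun _ => by omega) (fun h => absurd rfl h)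
  have htight : ∀ c, c ≠ c0 → 0 < η c → vec p η c = max (vec p δ c) 0 := by
    intro c hc hpos
    refine le_antisymm (hv c hc) (not_lt.1 fun hlt => ?_)
    exact hdec c hpos (fun h => absurd h hc) (fun _ => hlt)
  set l : ℤ := p * δ (c0 + 1) with hl
  have hl2 : 2 ≤ l := by have := hδ (c0 + 1); nlinarith
  have hdom : ∀ n : ℕ, l * η (c0 - n) ≤ δ (c0 - n) - η (c0 - n) := by
    intro n
    induction n with
    | zero =>
      simp only [Nat.cast_zero, sub_zero, hη1]
      simp only [vec] at hneg
      omega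
    | succ n ih =>
      have hcc : c0 - ((n + 1 : ℕ) : ZMod f) + 1 = c0 - n := by push_cast; ring
      set c := c0 - ((n + 1 : ℕ) : ZMod f) with hc
      by_cases hcc0 : c = c0
      · rw [hcc0, hη1]
        simp only [vec] at hneg
        omega
      rcases (h0 c).eq_or_lt with hz | hpos
      · rw [← hz]; have := hδ c; omega
      · have ht := htight c hcc0 hpos
        rw [← hcc] at ih
        simp only [vec] at ht
        rcases le_total (p * δ (c + 1) - δ c) 0 with hD | hD
        · rw [max_eq_right hD] at ht
          nlinarith
        · rw [max_eq_left hD] at ht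
          nlinarith
  have hdom' : ∀ c, l * η c ≤ δ c - η c := by
    intro c
    have := hdom (c0 - c).val
    rwa [ZMod.natCast_zmod_val, sub_sub_cancel] at this
  have hz : η (c0 + 1) = 0 := by
    by_contra hcon
    have h2 := h0 (c0 + 1)
    have h3 := hdom' (c0 + 1)
    have h4 := hδ (c0 + 1)
    have h5 : 1 ≤ η (c0 + 1) := by omega
    nlinarith
  refine ⟨η, h0, hη1, fun c => ?_, fun c => ?_⟩
  · have h2 := hdom' c
    have h3 := h0 c
    have h4 := hδ c
    rcases h3.eq_or_lt with h5 | h5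
    · omega
    · nlinarith
  · by_cases hc : c = c0
    · subst hc
      have : vec p η c = -1 := by simp [vec, hz, hη1]
      omega
    · rcases (h0 c).eq_or_lt with h5 | h5
      · have h2 := hv c hc
        have h3 : 0 ≤ vec p η c := by
          simp only [vec]; nlinarith [h0 (c + 1)]
        omega
      · have := htight c hc h5
        omega

/-- The class sums of the optimal family are nested. If they decrease somewhere between `h i` and
`h (i + 1)`, moving an exchange vector from `h (i + 1)` to `h i` gives, by convexity, another
optimal family with nonnegative class sums, contrary to uniqueness. -/
lemma UnitData.chain (H : UnitData p pos) {h : ℕ → ZMod f → ℤ} (hh : Adm p d N h)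
    (hmin : ∀ g, Adm p d N g → famCost p pos d h ≤ famCost p pos d g)
    (hh0 : ∀ i < d, ∀ c, 0 ≤ vec p (h i) c) (i : ℕ) (hi : i + 1 < d) (c : ZMod f) :
    vec p (h i) c ≤ vec p (h (i + 1)) c := by
  by_contra hcon
  have hsub : ∀ b, vec p (fun c => h (i + 1) c - h i c) b = vec p (h (i + 1)) b - vec p (h i) b := by
    intro b; simp only [vec]; ring
  obtain ⟨η, h0, h1, h2, h3⟩ := exists_exchange H.two_le (δ := fun c => h (i + 1) c - h i c)
    (c0 := c) (fun b => by have := hh.step i hi b; omega) (by rw [hsub]; omega)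
  simp only [hsub] at h3
  set u : ZMod f → ℤ := fun b => h i b + η b with hu
  set w : ZMod f → ℤ := fun b => h (i + 1) b - η b with hw
  have huv : ∀ b, vec p u b = vec p (h i) b + vec p η b := fun b => by simp only [vec, hu]; ring
  have hwv : ∀ b, vec p w b = vec p (h (i + 1)) b - vec p η b := fun b => by
    simp only [vec, hw]; ring
  set e : ℕ → ZMod f → ℤ := fun t => if t = i then u else if t = i + 1 then w else h t with he
  have hei : e i = u := by simp [he]
  have hei1 : e (i + 1) = w := by simp [he]
  have het : ∀ t, t ≠ i → t ≠ i + 1 → e t = h t := fun t a b => by simp [he, a, b]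
  have hbd : ∀ t < d, ∀ b, 0 ≤ vec p (e t) b ∧ vec p (e t) b ≤ N b := by
    intro t ht b
    have a1 := hh0 i (by omega) b
    have a2 := hh0 (i + 1) hi b
    have a3 := hh.cap i (by omega) b
    have a4 := hh.cap (i + 1) hi b
    have a5 := h3 b
    by_cases t1 : t = i
    · subst t1; rw [hei, huv]; omega
    · by_cases t2 : t = i + 1
      · subst t2; rw [hei1, hwv]; omega
      · rw [het t t1 t2]; exact ⟨hh0 t ht b, hh.cap t ht b⟩
  have hadm : Adm p d N e := by
    refine ⟨fun t ht b => ?_, fun t ht b => ?_, fun t ht b => (hbd t ht b).2⟩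
    · have a1 := h0 b
      have a2 := h2 b
      by_cases t1 : t = i
      · subst t1; rw [hei]; have := hh.base t ht b; simp only [hu]; omega
      · by_cases t2 : t = i + 1
        · subst t2; rw [hei1]; have := hh.base i (by omega) b; simp only [hw]; push_cast; omega
        · rw [het t t1 t2]; exact hh.base t ht b
    · have a1 := h0 b
      have a2 := h2 b
      have a3 := hh.step t ht b
      by_cases t1 : t = i
      · subst t1; rw [hei, hei1]; simp only [hu, hw]; omega
      · by_cases t2 : t = i + 1
        · subst t2; rw [hei1, het (i + 1 + 1) (by omega) (by omega)]; simp only [hw]; omega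
        · rw [het t t1 t2]
          by_cases t3 : t + 1 = i
          · rw [t3, hei]; rw [t3] at a3; simp only [hu]; omega
          · rw [het (t + 1) t3 (by omega)]; exact a3
  have hcost : famCost p pos d e ≤ famCost p pos d h := by
    have hi0 : i ∈ Finset.range d := Finset.mem_range.2 (by omega)
    have hi1 : i + 1 ∈ (Finset.range d).erase i := by simp [hi]
    unfold famCost
    rw [← Finset.add_sum_erase _ _ hi0, ← Finset.add_sum_erase _ _ hi1,
      ← Finset.add_sum_erase _ (fun t => pathCost p pos (h t)) hi0,
      ← Finset.add_sum_erase _ (fun t => pathCost p pos (h t)) hi1, hei, hei1]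
    have hrest : ∑ t ∈ ((Finset.range d).erase i).erase (i + 1), pathCost p pos (e t) =
        ∑ t ∈ ((Finset.range d).erase i).erase (i + 1), pathCost p pos (h t) :=
      Finset.sum_congr rfl fun t ht => by
        simp only [Finset.mem_erase] at ht
        rw [het t ht.2.1 ht.1]
    have hmain : pathCost p pos u + pathCost p pos w ≤
        pathCost p pos (h i) + pathCost p pos (h (i + 1)) := by
      unfold pathCost
      rw [← Finset.sum_add_distrib, ← Finset.sum_add_distrib]
      refine Finset.sum_le_sum fun b _ => ?_
      rw [huv, hwv]
      have a5 := h3 b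
      rcases le_total (vec p (h i) b) (vec p (h (i + 1)) b) with hle | hle
      · exact H.cst_between b (by omega) (by omega) (by ring)
      · rw [add_comm (cst p pos b (vec p (h i) b))]
        exact H.cst_between b (by omega) (by omega) (by ring)
    rw [hrest]
    omega
  have := H.unique hadm hh hmin (fun t ht b => (hbd t ht b).1) hh0 hcost i (by omega)
  rw [hei] at this
  have := congrFun this c
  simp only [hu] at this
  omega

/-- Summary of the optimization problem: the optimal family with nonnegative class sums exists,
has nested class sums, and is unique. -/
theorem UnitData.exists_opt (H : UnitData p pos) (hN : ∀ c, 0 ≤ N c)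
    (hex : ∃ h, Adm p d N h) :
    ∃ h, Adm p d N h ∧ (∀ i < d, ∀ c, 0 ≤ vec p (h i) c) ∧
      (∀ i, i + 1 < d → ∀ c, vec p (h i) c ≤ vec p (h (i + 1)) c) ∧
      (∀ g, Adm p d N g → famCost p pos d h ≤ famCost p pos d g) ∧
      ∀ g, Adm p d N g → (∀ i < d, ∀ c, 0 ≤ vec p (g i) c) →
        famCost p pos d g ≤ famCost p pos d h → ∀ i < d, g i = h i := by
  obtain ⟨h, hh, hmin, hh0⟩ := H.exists_nonneg_min hN hex
  exact ⟨h, hh, hh0, H.chain hh hmin hh0, hmin, fun g hg hg0 hc =>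
    H.unique hg hh hmin hg0 hh0 hc⟩

end

/-! ### Digits sorted into classes modulo `f` -/

/-- The sum of the digits `b i`, `i < J`, in the positions `i` of class `c` modulo `f`. -/
noncomputable def clsum {f : ℕ} (b : ℕ → ℕ) (c : ZMod f) (J : ℕ) : ℕ :=
  ∑ i ∈ Finset.range J, if (i : ZMod f) = c then b i else 0

/-- The position of the `r`-th unit of class `c` (counting from `0`) when position `j` holds `κ j`
units: the `j` such that `r` lies in `[clsum κ c j, clsum κ c (j + 1))`. -/
noncomputable def upos {f : ℕ} (κ : ℕ → ℕ) (c : ZMod f) (r : ℕ) : ℕ :=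
  sInf {j | r < clsum κ c (j + 1)}

/-- The digits of the cheapest choice of `V c` units in each class `c`. -/
noncomputable def bdig (f : ℕ) (κ : ℕ → ℕ) (V : ZMod f → ℕ) (j : ℕ) : ℕ :=
  min (V j - clsum κ (j : ZMod f) j) (κ j)

/-- The number `∑ b j * p ^ j`, over `j < L`, with digits `b j`. -/
def val (p L : ℕ) (b : ℕ → ℕ) : ℕ := ∑ j ∈ Finset.range L, b j * p ^ j

section
variable {p f L : ℕ} {κ : ℕ → ℕ}

lemma clsum_succ (b : ℕ → ℕ) (c : ZMod f) (J : ℕ) :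
    clsum b c (J + 1) = clsum b c J + if (J : ZMod f) = c then b J else 0 :=
  Finset.sum_range_succ _ _

lemma clsum_mono (b : ℕ → ℕ) (c : ZMod f) : Monotone (clsum b c) :=
  monotone_nat_of_le_succ fun J => by rw [clsum_succ]; omega

lemma clsum_le {a b : ℕ → ℕ} {J : ℕ} (h : ∀ j < J, a j ≤ b j) (c : ZMod f) :
    clsum a c J ≤ clsum b c J := by
  refine Finset.sum_le_sum fun i hi => ?_
  split_ifs
  · exact h i (Finset.mem_range.1 hi)
  · exact le_rfl

lemma cst_natCast (pos : ZMod f → ℕ → ℕ) (c : ZMod f) (n : ℕ) :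
    cst p pos c (n : ℤ) = ∑ r ∈ Finset.range n, p ^ pos c r := by simp [cst]

lemma clsum_bdig (V : ZMod f → ℕ) (c : ZMod f) (J : ℕ) :
    clsum (bdig f κ V) c J = min (V c) (clsum κ c J) := by
  induction J with
  | zero => simp [clsum]
  | succ J ih =>
    rw [clsum_succ, clsum_succ, ih]
    split_ifs with hc
    · subst hc
      simp only [bdig]
      omega
    · simp

lemma bdig_mono {V W : ZMod f → ℕ} (h : ∀ c, V c ≤ W c) (j : ℕ) :
    bdig f κ V j ≤ bdig f κ W j := by
  have := h j
  simp only [bdig]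
  omega

variable [NeZero f]

lemma clsum_unbounded (hκ : ∀ j, L ≤ j → 0 < κ j) (c : ZMod f) (r : ℕ) :
    ∃ j, r < clsum κ c (j + 1) := by
  induction r with
  | zero =>
    refine ⟨c.val + f * L, ?_⟩
    rw [clsum_succ, if_pos (by simp)]
    have := hκ (c.val + f * L) (by nlinarith [NeZero.pos f])
    omega
  | succ r ih =>
    obtain ⟨j, hj⟩ := ih
    refine ⟨c.val + f * (L + j + 1), ?_⟩
    rw [clsum_succ, if_pos (by simp)]
    have h1 := hκ (c.val + f * (L + j + 1)) (by nlinarith [NeZero.pos f])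
    have h2 := clsum_mono κ c (show j + 1 ≤ c.val + f * (L + j + 1) by nlinarith [NeZero.pos f])
    omega

lemma upos_eq_iff (hκ : ∀ j, L ≤ j → 0 < κ j) {c : ZMod f} {r j : ℕ} :
    upos κ c r = j ↔ clsum κ c j ≤ r ∧ r < clsum κ c (j + 1) := by
  have hmem : r < clsum κ c (upos κ c r + 1) := Nat.sInf_mem (clsum_unbounded hκ c r)
  have hlow : clsum κ c (upos κ c r) ≤ r := by
    rcases Nat.eq_zero_or_pos (upos κ c r) with h0 | h0
    · rw [h0]; simp [clsum]
    · by_contra hcon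
      have : upos κ c r ≤ upos κ c r - 1 := Nat.sInf_le (by
        change r < clsum κ c (upos κ c r - 1 + 1)
        rw [Nat.sub_add_cancel h0]; omega)
      omega
  constructor
  · rintro rfl; exact ⟨hlow, hmem⟩
  · rintro ⟨h1, h2⟩
    rcases lt_trichotomy (upos κ c r) j with h | h | h
    · have := clsum_mono κ c (show upos κ c r + 1 ≤ j from h); omega
    · exact h
    · have := clsum_mono κ c (show j + 1 ≤ upos κ c r from h); omega

lemma upos_lt (hκ : ∀ j, L ≤ j → 0 < κ j) {c : ZMod f} {r j : ℕ} (h : r < clsum κ c j) :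
    upos κ c r < j := by
  have h1 := (upos_eq_iff hκ (c := c) (r := r)).1 rfl
  by_contra hcon
  have := clsum_mono κ c (not_lt.1 hcon)
  omega

lemma le_upos (hκ : ∀ j, L ≤ j → 0 < κ j) {c : ZMod f} {r j : ℕ} (h : clsum κ c j ≤ r) :
    j ≤ upos κ c r := by
  have h1 := (upos_eq_iff hκ (c := c) (r := r)).1 rfl
  by_contra hcon
  have := clsum_mono κ c (show upos κ c r + 1 ≤ j by omega)
  omega

lemma unitData_upos (hp : 2 ≤ p) (hκ : ∀ j, L ≤ j → 0 < κ j) (hκp : ∀ j, κ j ≤ p - 1) :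
    UnitData p (upos (f := f) κ) := by
  refine ⟨hp, fun c r s hrs => ?_, fun c r => ?_, fun c c' r r' h => ?_⟩
  · have h1 := (upos_eq_iff hκ (c := c) (r := r)).1 rfl
    exact le_upos hκ (h1.1.trans hrs)
  · have h1 := (upos_eq_iff hκ (c := c) (r := r)).1 rfl
    refine le_upos hκ ?_
    rw [clsum_succ]
    have := hκp (upos κ c r)
    split_ifs <;> omega
  · have key : ∀ (c : ZMod f) (r : ℕ), ((upos κ c r : ℕ) : ZMod f) = c := by
      intro c r
      have h1 := (upos_eq_iff hκ (c := c) (r := r)).1 rfl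
      by_contra hcon
      rw [clsum_succ, if_neg hcon] at h1
      omega
    rw [← key c r, h, key]

/-- A number with digits at most `κ` costs at least as much as the cheapest units with the same
class sums. -/
lemma val_ge (hκ : ∀ j, L ≤ j → 0 < κ j) (hp : 0 < p) {b : ℕ → ℕ} (J : ℕ)
    (hb : ∀ j < J, b j ≤ κ j) :
    ∑ c : ZMod f, cst p (upos κ) c (clsum b c J : ℤ) ≤ val p J b := by
  induction J with
  | zero => simp [clsum, cst]
  | succ J ih =>
    have h1 := ih fun j hj => hb j (by omega)
    rw [val, Finset.sum_range_succ, ← val]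
    have h2 : ∀ c : ZMod f, cst p (upos κ) c (clsum b c (J + 1) : ℤ) ≤
        cst p (upos κ) c (clsum b c J : ℤ) + if (J : ZMod f) = c then b J * p ^ J else 0 := by
      intro c
      rw [clsum_succ]
      split_ifs with hc
      · rw [cst_natCast, cst_natCast, Finset.sum_range_add]
        gcongr
        calc ∑ x ∈ Finset.range (b J), p ^ upos κ c (clsum b c J + x)
            ≤ ∑ x ∈ Finset.range (b J), p ^ J := by
              refine Finset.sum_le_sum fun x hx => Nat.pow_le_pow_right hp ?_
              refine Nat.lt_succ_iff.1 (upos_lt hκ ?_)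
              have h3 := clsum_le (f := f) (fun j hj => hb j (Nat.lt_succ_of_lt hj)) c
              rw [Nat.succ_eq_add_one, clsum_succ, if_pos hc]
              have := hb J (by omega)
              have := Finset.mem_range.1 hx
              omega
          _ = b J * p ^ J := by simp
      · simp
    refine (Finset.sum_le_sum fun c _ => h2 c).trans ?_
    rw [Finset.sum_add_distrib, Finset.sum_ite_eq]
    simpa using h1

/-- The cheapest choice of units attains the lower bound of `val_ge`. -/
lemma val_bdig (hκ : ∀ j, L ≤ j → 0 < κ j) (V : ZMod f → ℕ) (J : ℕ) :
    val p J (bdig f κ V) = ∑ c : ZMod f, cst p (upos κ) c (min (V c) (clsum κ c J) : ℕ) := by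
  induction J with
  | zero => simp [clsum, cst, val]
  | succ J ih =>
    rw [val, Finset.sum_range_succ, ← val, ih]
    have h2 : ∀ c : ZMod f, cst p (upos κ) c (min (V c) (clsum κ c (J + 1)) : ℕ) =
        cst p (upos κ) c (min (V c) (clsum κ c J) : ℕ) +
          if (J : ZMod f) = c then bdig f κ V J * p ^ J else 0 := by
      intro c
      rw [clsum_succ]
      split_ifs with hc
      · subst hc
        have h3 : min (V J) (clsum κ (J : ZMod f) J + κ J) =
            min (V J) (clsum κ (J : ZMod f) J) + bdig f κ V J := by
          simp only [bdig]; omega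
        rw [h3, cst_natCast, cst_natCast, Finset.sum_range_add]
        congr 1
        rw [Finset.sum_congr rfl (g := fun _ => p ^ J), Finset.sum_const, Finset.card_range,
          smul_eq_mul]
        intro x hx
        rw [(upos_eq_iff hκ).2]
        rw [clsum_succ, if_pos rfl]
        have := Finset.mem_range.1 hx
        simp only [bdig] at this
        omega
      · simp
    rw [Finset.sum_congr rfl fun c _ => h2 c, Finset.sum_add_distrib, Finset.sum_ite_eq]
    simp

lemma val_modEq (b : ℕ → ℕ) (J : ℕ) :
    (val p J b : ℤ) ≡ ∑ r ∈ Finset.range f, (p : ℤ) ^ r * (clsum b (r : ZMod f) J : ℤ)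
      [ZMOD (p : ℤ) ^ f - 1] := by
  induction J with
  | zero => simp [val, clsum]
  | succ J ih =>
    rw [val, Finset.sum_range_succ, ← val]
    simp only [clsum_succ]
    push_cast
    simp only [mul_add, Finset.sum_add_distrib]
    refine ih.add ?_
    have hf := NeZero.pos f
    have h1 : ∑ r ∈ Finset.range f, (p : ℤ) ^ r * (if (J : ZMod f) = r then (b J : ℤ) else 0) =
        (p : ℤ) ^ (J % f) * b J := by
      rw [Finset.sum_eq_single (J % f)]
      · rw [if_pos (by simp)]
      · intro r hr hne
        rw [if_neg, mul_zero]
        intro h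
        rw [ZMod.natCast_eq_natCast_iff'] at h
        rw [Nat.mod_eq_of_lt (Finset.mem_range.1 hr)] at h
        exact hne h.symm
      · intro h
        exact absurd (Finset.mem_range.2 (Nat.mod_lt _ hf)) h
    rw [h1, mul_comm]
    refine Int.ModEq.mul_right _ ?_
    conv_lhs => rw [← Nat.mod_add_div J f, pow_add, pow_mul]
    have h2 : (p : ℤ) ^ f ≡ 1 [ZMOD (p : ℤ) ^ f - 1] :=
      Int.modEq_iff_dvd.2 ⟨-1, by ring⟩
    simpa using (h2.pow (J / f)).mul_left ((p : ℤ) ^ (J % f))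

lemma dvd_val_of_vec {b : ℕ → ℕ} {J : ℕ} {h : ZMod f → ℤ}
    (hh : ∀ c, vec p h c = clsum b c J) : (p : ℤ) ^ f - 1 ∣ (val p J b : ℤ) := by
  refine (val_modEq b J).dvd_iff.2 ?_
  have := sum_vec (p := p) h 0
  simp only [hh, zero_add] at this
  rw [this]
  exact Dvd.intro _ rfl

lemma exists_vec_of_dvd (hp : 2 ≤ p) {b : ℕ → ℕ} {J : ℕ}
    (hdvd : (p : ℤ) ^ f - 1 ∣ (val p J b : ℤ)) :
    ∃ h : ZMod f → ℤ, ∀ c, vec p h c = clsum b c J := by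
  have hq : (p : ℤ) ^ f - 1 ≠ 0 := by
    have : 1 < p ^ f := Nat.one_lt_pow (NeZero.ne f) hp
    have : (1 : ℤ) < (p : ℤ) ^ f := by exact_mod_cast this
    omega
  set Z : ZMod f → ℤ := fun c => ∑ r ∈ Finset.range f, (p : ℤ) ^ r * (clsum b (c + (r : ZMod f)) J : ℤ) with hZ
  have hrec : ∀ c, p * Z (c + 1) = Z c + ((p : ℤ) ^ f - 1) * clsum b c J := by
    intro c
    have := Finset.sum_range_sub (fun r : ℕ => (p : ℤ) ^ r * (clsum b (c + (r : ZMod f)) J : ℤ)) f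
    simp only [pow_zero, Nat.cast_zero, add_zero, one_mul, CharP.cast_eq_zero] at this
    rw [sub_mul, one_mul, ← this, Finset.sum_sub_distrib]
    simp only [hZ]
    rw [Finset.mul_sum, add_sub_cancel]
    refine Finset.sum_congr rfl fun r _ => ?_
    push_cast
    rw [pow_succ, add_assoc c 1, add_comm (1 : ZMod f)]
    ring
  have hdiv : ∀ n : ℕ, (p : ℤ) ^ f - 1 ∣ Z n := by
    intro n
    induction n with
    | zero =>
      refine ((val_modEq b J).dvd_iff.1 hdvd).trans ?_
      simp [hZ]
    | succ n ih =>
      have h1 : (p : ℤ) ^ f - 1 ∣ p * Z ((n : ZMod f) + 1) := by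
        rw [hrec]; exact dvd_add ih (Dvd.intro _ rfl)
      have h2 : IsCoprime ((p : ℤ) ^ f - 1) (p : ℤ) := by
        refine ⟨-1, (p : ℤ) ^ (f - 1), ?_⟩
        rw [← pow_succ, Nat.sub_add_cancel (NeZero.pos f)]
        ring
      push_cast
      exact h2.dvd_of_dvd_mul_left h1
  have hdiv' : ∀ c, (p : ℤ) ^ f - 1 ∣ Z c := fun c => by
    have := hdiv c.val
    rwa [ZMod.natCast_zmod_val] at this
  choose h hh using hdiv'
  refine ⟨h, fun c => ?_⟩
  have := hrec c
  rw [hh, hh] at this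
  refine mul_left_cancel₀ hq ?_
  simp only [vec]
  linear_combination this

/-- A positive number with class sums `vec p h` has a positive path `h`. -/
lemma vec_pos (hp : 2 ≤ p) {b : ℕ → ℕ} {J : ℕ} {h : ZMod f → ℤ}
    (hh : ∀ c, vec p h c = clsum b c J) (hpos : 0 < val p J b) (c : ZMod f) : 1 ≤ h c := by
  have hq : 0 < (p : ℤ) ^ f - 1 := by
    have : 1 < p ^ f := Nat.one_lt_pow (NeZero.ne f) hp
    have : (1 : ℤ) < (p : ℤ) ^ f := by exact_mod_cast this
    omega
  have hex : ∃ j ∈ Finset.range J, 0 < b j * p ^ j := by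
    by_contra hcon
    push Not at hcon
    rw [val, Finset.sum_eq_zero fun j hj => Nat.le_zero.1 (hcon j hj)] at hpos
    omega
  obtain ⟨j, hj, hbj⟩ := hex
  have hbj' : 0 < b j := Nat.pos_of_mul_pos_right hbj
  have h1 := sum_vec (p := p) h c
  have h2 : 0 < ∑ r ∈ Finset.range f, (p : ℤ) ^ r * vec p h (c + r) := by
    refine Finset.sum_pos' (fun r _ => ?_) ⟨((j : ZMod f) - c).val, ?_, ?_⟩
    · rw [hh]; positivity
    · exact Finset.mem_range.2 (ZMod.val_lt _)
    · rw [ZMod.natCast_zmod_val, add_sub_cancel, hh]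
      have : 0 < clsum b (j : ZMod f) J :=
        hbj'.trans_le ((by simp : b j ≤ if (j : ZMod f) = j then b j else 0).trans
          (Finset.single_le_sum (f := fun i : ℕ => if (i : ZMod f) = j then b i else 0)
            (fun _ _ => Nat.zero_le _) hj))
      positivity
  rw [h1] at h2
  have := pos_of_mul_pos_right h2 hq.le
  omega

end

/-! ### The tuple of least cost -/

/-- The digits `b i j` of `d` positive multiples of `p ^ f - 1` (the bins, `i < d`) whose sum has
digits at most `κ` without carrying. Only the positions `j < L` count. -/
structure Valid (p f d L : ℕ) (κ : ℕ → ℕ) (b : ℕ → ℕ → ℕ) : Prop where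
  le : ∀ j < L, ∑ i ∈ Finset.range d, b i j ≤ κ j
  pos : ∀ i < d, 0 < val p L (b i)
  dvd : ∀ i < d, (p : ℤ) ^ f - 1 ∣ (val p L (b i) : ℤ)

/-- The sum of the partial sums of the bins, so that bin `i` has weight `d - i`. -/
def binCost (p d L : ℕ) (b : ℕ → ℕ → ℕ) : ℕ :=
  ∑ t ∈ Finset.range d, ∑ i ∈ Finset.range (t + 1), val p L (b i)

section
variable {p f d L : ℕ} {κ : ℕ → ℕ}

lemma val_sum (s : Finset ℕ) (b : ℕ → ℕ → ℕ) :
    val p L (fun j => ∑ i ∈ s, b i j) = ∑ i ∈ s, val p L (b i) := by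
  simp only [val, Finset.sum_mul]
  exact Finset.sum_comm

lemma clsum_sum (s : Finset ℕ) (b : ℕ → ℕ → ℕ) (c : ZMod f) :
    clsum (fun j => ∑ i ∈ s, b i j) c L = ∑ i ∈ s, clsum (b i) c L := by
  simp only [clsum]
  rw [Finset.sum_comm]
  refine Finset.sum_congr rfl fun j _ => ?_
  split_ifs <;> simp

lemma vec_sum (s : Finset ℕ) (η : ℕ → ZMod f → ℤ) (c : ZMod f) :
    vec p (fun c => ∑ i ∈ s, η i c) c = ∑ i ∈ s, vec p (η i) c := by
  simp only [vec, Finset.mul_sum, Finset.sum_sub_distrib]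

lemma sum_le_of_lt {κ : ℕ → ℕ} {b : ℕ → ℕ → ℕ}
    (hle : ∀ j < L, ∑ i ∈ Finset.range d, b i j ≤ κ j) {t : ℕ} (ht : t < d) {j : ℕ} (hj : j < L) :
    ∑ i ∈ Finset.range (t + 1), b i j ≤ κ j :=
  (Finset.sum_le_sum_of_subset (Finset.range_mono (by omega))).trans (hle j hj)

variable [NeZero f]

/-- The paths of the partial sums of a valid tuple of bins form an admissible family, whose costs
bound the partial sums from below. -/
lemma Valid.exists_adm (hp : 2 ≤ p) (hκ : ∀ j, L ≤ j → 0 < κ j) {b : ℕ → ℕ → ℕ}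
    (hb : Valid p f d L κ b) :
    ∃ h : ℕ → ZMod f → ℤ, Adm p d (fun c => (clsum κ c L : ℤ)) h ∧
      (∀ i < d, ∀ c, 0 ≤ vec p (h i) c) ∧
      ∀ t < d, pathCost p (upos κ) (h t) ≤ ∑ i ∈ Finset.range (t + 1), val p L (b i) := by
  have hex : ∀ i, ∃ η : ZMod f → ℤ, i < d → ∀ c, vec p η c = clsum (b i) c L := by
    intro i
    by_cases hi : i < d
    · obtain ⟨η, hη⟩ := exists_vec_of_dvd hp (hb.dvd i hi)
      exact ⟨η, fun _ => hη⟩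
    · exact ⟨0, fun h => absurd h hi⟩
  choose η hη using hex
  have hη1 : ∀ i < d, ∀ c, 1 ≤ η i c := fun i hi c => vec_pos hp (hη i hi) (hb.pos i hi) c
  set h : ℕ → ZMod f → ℤ := fun t c => ∑ i ∈ Finset.range (t + 1), η i c with hh
  have hvec : ∀ t < d, ∀ c,
      vec p (h t) c = clsum (fun j => ∑ i ∈ Finset.range (t + 1), b i j) c L := by
    intro t ht c
    rw [clsum_sum]
    simp only [hh]
    rw [vec_sum]
    push_cast
    refine Finset.sum_congr rfl fun i hi => hη i ?_ c
    have := Finset.mem_range.1 hi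
    omega
  refine ⟨h, ⟨fun t ht c => ?_, fun t ht c => ?_, fun t ht c => ?_⟩, fun t ht c => ?_,
    fun t ht => ?_⟩
  · calc (t : ℤ) + 1 = ∑ i ∈ Finset.range (t + 1), (1 : ℤ) := by simp
      _ ≤ h t c := Finset.sum_le_sum fun i hi => hη1 i (by
        have := Finset.mem_range.1 hi
        omega) c
  · simp only [hh]
    rw [Finset.sum_range_succ _ (t + 1)]
    have := hη1 (t + 1) ht c
    omega
  · rw [hvec t ht]
    exact_mod_cast clsum_le (fun j hj => sum_le_of_lt hb.le ht hj) c
  · rw [hvec t ht]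
    positivity
  · rw [← val_sum]
    refine le_trans (le_of_eq ?_) (val_ge (f := f) hκ (by omega) L
      (fun j hj => sum_le_of_lt hb.le ht hj))
    exact Finset.sum_congr rfl fun c _ => by rw [hvec t ht]

/-- If there is a valid tuple of bins, then there is one of least cost, and its bins are determined
by their cost. The nested cheapest digits of the optimal family are the partial sums of this
tuple. -/
theorem exists_unique_min (hp : 2 ≤ p) (hκ : ∀ j, L ≤ j → 0 < κ j) (hκp : ∀ j, κ j ≤ p - 1)
    (hex : ∃ b, Valid p f d L κ b) :
    ∃ b, Valid p f d L κ b ∧ ∀ b', Valid p f d L κ b' → binCost p d L b' ≤ binCost p d L b →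
      ∀ i < d, val p L (b' i) = val p L (b i) := by
  have H : UnitData p (upos (f := f) κ) := unitData_upos hp hκ hκp
  obtain ⟨b0, hb0⟩ := hex
  obtain ⟨h0, hadm0, -, -⟩ := hb0.exists_adm hp hκ
  obtain ⟨h, hh, hh0, hchain, hmin, huniq⟩ := H.exists_opt
    (N := fun c => (clsum κ c L : ℤ)) (fun c => by positivity) ⟨h0, hadm0⟩
  -- shift the family so that index `0` is the zero path
  set g : ℕ → ZMod f → ℤ := fun s => if s = 0 then 0 else h (s - 1) with hg
  have hgz : g 0 = 0 := by simp [hg]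
  have hgs : ∀ t, g (t + 1) = h t := fun t => by simp [hg]
  have hvz : ∀ c, vec p (g 0) c = 0 := fun c => by simp [hgz, vec]
  have hg0 : ∀ s ≤ d, ∀ c, 0 ≤ vec p (g s) c := by
    intro s hs c
    cases s with
    | zero => rw [hvz]
    | succ t => rw [hgs]; exact hh0 t (by omega) c
  have hgN : ∀ s ≤ d, ∀ c, vec p (g s) c ≤ clsum κ c L := by
    intro s hs c
    cases s with
    | zero => rw [hvz]; positivity
    | succ t => rw [hgs]; exact hh.cap t (by omega) c
  have hgm : ∀ t < d, ∀ c, vec p (g t) c ≤ vec p (g (t + 1)) c := by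
    intro t ht c
    cases t with
    | zero => rw [hvz]; exact hg0 _ (by omega) c
    | succ t => rw [hgs, hgs]; exact hchain t ht c
  have hgst : ∀ t < d, ∀ c, g t c + 1 ≤ g (t + 1) c := by
    intro t ht c
    cases t with
    | zero =>
      rw [hgz, hgs]
      simpa using hh.base 0 ht c
    | succ t => rw [hgs, hgs]; exact hh.step t ht c
  set V : ℕ → ZMod f → ℕ := fun s c => (vec p (g s) c).toNat with hV
  have hVz : ∀ s ≤ d, ∀ c, ((V s c : ℕ) : ℤ) = vec p (g s) c := fun s hs c =>
    Int.toNat_of_nonneg (hg0 s hs c)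
  have hVN : ∀ s ≤ d, ∀ c, min (V s c) (clsum κ c L) = V s c := by
    intro s hs c
    have h1 := hgN s hs c
    rw [← hVz s hs c] at h1
    exact min_eq_left (by exact_mod_cast h1)
  have hVm : ∀ t < d, ∀ c, V t c ≤ V (t + 1) c := fun t ht c => Int.toNat_le_toNat (hgm t ht c)
  set B : ℕ → ℕ → ℕ := fun s => bdig f κ (V s) with hB
  have hBm : ∀ t < d, ∀ j, B t j ≤ B (t + 1) j := fun t ht j => bdig_mono (hVm t ht) j
  have hB0 : ∀ j, B 0 j = 0 := fun j => by
    simp only [hB, bdig, hV, hvz]; simp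
  set b : ℕ → ℕ → ℕ := fun t j => B (t + 1) j - B t j with hb
  have hbsum : ∀ t ≤ d, ∀ j, ∑ i ∈ Finset.range t, b i j = B t j := by
    intro t ht j
    induction t with
    | zero => simp [hB0]
    | succ t ih =>
      rw [Finset.sum_range_succ, ih (by omega)]
      have := hBm t (by omega) j
      simp only [hb]
      omega
  have hBval : ∀ t < d, val p L (B (t + 1)) = pathCost p (upos κ) (h t) := by
    intro t ht
    rw [hB, val_bdig hκ]
    refine Finset.sum_congr rfl fun c _ => ?_
    rw [hVN _ (by omega), hVz _ (by omega), hgs]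
  have hbval : ∀ t < d, ∑ i ∈ Finset.range (t + 1), val p L (b i) = pathCost p (upos κ) (h t) := by
    intro t ht
    rw [← val_sum, ← hBval t ht]
    congr 1
    funext j
    exact hbsum (t + 1) (by omega) j
  have hbcls : ∀ t < d, ∀ c, vec p (fun c => g (t + 1) c - g t c) c = clsum (b t) c L := by
    intro t ht c
    have h1 : clsum (b t) c L + clsum (B t) c L = clsum (B (t + 1)) c L := by
      simp only [clsum]
      rw [← Finset.sum_add_distrib]
      refine Finset.sum_congr rfl fun j _ => ?_
      split_ifs
      · have := hBm t ht j
        simp only [hb]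
        omega
      · rfl
    simp only [hB, clsum_bdig] at h1
    rw [hVN _ (by omega), hVN _ (by omega)] at h1
    have h2 : vec p (fun c => g (t + 1) c - g t c) c = vec p (g (t + 1)) c - vec p (g t) c := by
      simp only [vec]; ring
    rw [h2, ← hVz _ (by omega), ← hVz _ (by omega)]
    omega
  have hvalid : Valid p f d L κ b := by
    refine ⟨fun j _ => ?_, fun t ht => ?_, fun t ht => dvd_val_of_vec (hbcls t ht)⟩
    · rw [hbsum d le_rfl]; exact min_le_right _ _
    · by_contra hcon
      have hz : val p L (b t) = 0 := by omega
      have hbz : ∀ j ∈ Finset.range L, b t j = 0 := by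
        intro j hj
        have := (Finset.sum_eq_zero_iff.1 hz) j hj
        rcases Nat.mul_eq_zero.1 this with h1 | h1
        · exact h1
        · exact absurd h1 (by positivity)
      have hcz : ∀ c, vec p (fun c => g (t + 1) c - g t c) c = vec p (0 : ZMod f → ℤ) c := by
        intro c
        rw [hbcls t ht, clsum, Finset.sum_eq_zero fun j hj => by rw [hbz j hj]; simp]
        simp [vec]
      have h1 := congrFun (vec_injective hp hcz) 0
      have h2 := hgst t ht 0
      simp only [Pi.zero_apply] at h1
      omega
  refine ⟨b, hvalid, fun b' hb' hcost => ?_⟩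
  obtain ⟨h', hadm', hnn', hle'⟩ := hb'.exists_adm hp hκ
  have hbc : binCost p d L b = famCost p (upos κ) d h :=
    Finset.sum_congr rfl fun t ht => hbval t (Finset.mem_range.1 ht)
  have hle2 : ∀ t ∈ Finset.range d, pathCost p (upos κ) (h' t) ≤
      ∑ i ∈ Finset.range (t + 1), val p L (b' i) := fun t ht => hle' t (Finset.mem_range.1 ht)
  have h1 : famCost p (upos κ) d h' ≤ binCost p d L b' := Finset.sum_le_sum hle2
  have h2 := hmin h' hadm'
  have h3 := huniq h' hadm' hnn' (by omega)
  have h4 := (Finset.sum_eq_sum_iff_of_le hle2).1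
    (show famCost p (upos κ) d h' = binCost p d L b' by omega)
  have h5 : ∀ t ≤ d, ∑ i ∈ Finset.range t, val p L (b' i) = ∑ i ∈ Finset.range t, val p L (b i) := by
    intro t ht
    cases t with
    | zero => simp
    | succ t => rw [← h4 t (Finset.mem_range.2 ht), h3 t ht, hbval t ht]
  intro i hi
  have h6 := h5 (i + 1) hi
  rw [Finset.sum_range_succ, Finset.sum_range_succ, h5 i hi.le] at h6
  omega

end

/-! ### Expansion of the power sum -/

lemma val_digits (p k L : ℕ) : val p L (fun j => k / p ^ j % p) = k % p ^ L := by
  induction L with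
  | zero => simp [val, Nat.mod_one]
  | succ L ih =>
    rw [val, Finset.sum_range_succ, ← val, ih, Nat.mod_pow_succ, mul_comm]

/-- The digits of a number given by an expansion in base `p`. -/
lemma digit_val {p : ℕ} (L : ℕ) (b : ℕ → ℕ) (hb : ∀ j < L, b j < p) (i : ℕ) :
    val p L b / p ^ i % p = if i < L then b i else 0 := by
  induction L generalizing b i with
  | zero => simp [val]
  | succ L ih =>
    have hp : 0 < p := by have := hb 0 (by omega); omega
    have h1 : val p (L + 1) b = b 0 + p * val p L (fun j => b (j + 1)) := by
      rw [val, Finset.sum_range_succ', val, Finset.mul_sum, add_comm]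
      simp only [pow_zero, mul_one]
      congr 1
      exact Finset.sum_congr rfl fun j _ => by ring
    rw [h1]
    cases i with
    | zero =>
      simp only [pow_zero, Nat.div_one, Nat.add_mul_mod_self_left]
      rw [Nat.mod_eq_of_lt (hb 0 (by omega))]
      simp
    | succ i =>
      rw [pow_succ', ← Nat.div_div_eq_div_mul, Nat.add_mul_div_left _ _ hp,
        Nat.div_eq_of_lt (hb 0 (by omega)), zero_add, ih _ (fun j hj => hb (j + 1) (by omega))]
      simp

/-- The matrices `μ` of natural numbers whose row `j < L` sums to the `j`-th digit of `k`. They are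
the ways to distribute the digits of `k` among `d + 1` numbers without carrying. -/
noncomputable def digitMatrices (p k d L : ℕ) : Finset (Fin L → Fin (d + 1) → ℕ) :=
  Fintype.piFinset fun j => Finset.piAntidiag Finset.univ (k / p ^ (j : ℕ) % p)

/-- The number whose digits are the `i`-th column of `μ`. -/
def part (p : ℕ) {d L : ℕ} (μ : Fin L → Fin (d + 1) → ℕ) (i : Fin (d + 1)) : ℕ :=
  ∑ j, μ j i * p ^ (j : ℕ)

section
variable {p k d L : ℕ}

lemma mem_digitMatrices {μ : Fin L → Fin (d + 1) → ℕ} :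
    μ ∈ digitMatrices p k d L ↔ ∀ j : Fin L, ∑ i, μ j i = k / p ^ (j : ℕ) % p := by
  simp [digitMatrices, Fintype.mem_piFinset, Finset.mem_piAntidiag]

lemma sum_part (hkL : k < p ^ L) {μ : Fin L → Fin (d + 1) → ℕ} (hμ : μ ∈ digitMatrices p k d L) :
    ∑ i, part p μ i = k := by
  rw [mem_digitMatrices] at hμ
  simp only [part]
  rw [Finset.sum_comm]
  simp only [← Finset.sum_mul, hμ]
  have := val_digits p k L
  rw [val, Finset.sum_range, Nat.mod_eq_of_lt hkL] at this
  exact this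

lemma digit_part (hp : 0 < p) {μ : Fin L → Fin (d + 1) → ℕ} (hμ : μ ∈ digitMatrices p k d L)
    (i : Fin (d + 1)) (j : ℕ) :
    part p μ i / p ^ j % p = if h : j < L then μ ⟨j, h⟩ i else 0 := by
  rw [mem_digitMatrices] at hμ
  have h1 : part p μ i = val p L (fun j => if h : j < L then μ ⟨j, h⟩ i else 0) := by
    rw [val, Finset.sum_range, part]
    exact Finset.sum_congr rfl fun j _ => by rw [dif_pos j.2]
  rw [h1, digit_val]
  · split_ifs <;> rfl
  · intro j hj
    rw [dif_pos hj]
    calc μ ⟨j, hj⟩ i ≤ ∑ i, μ ⟨j, hj⟩ i :=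
          Finset.single_le_sum (fun _ _ => Nat.zero_le _) (Finset.mem_univ i)
      _ = _ := hμ ⟨j, hj⟩
      _ < p := Nat.mod_lt _ hp

lemma noCarry_part (hp : 2 ≤ p) (hkL : k < p ^ L) {μ : Fin L → Fin (d + 1) → ℕ}
    (hμ : μ ∈ digitMatrices p k d L) : NoCarry p (part p μ) k := by
  refine ⟨sum_part hkL hμ, fun j => ?_⟩
  simp only [Nat.getD_digits _ _ hp, digit_part (by omega) hμ]
  split_ifs with h
  · exact mem_digitMatrices.1 hμ ⟨j, h⟩
  · rw [Nat.div_eq_of_lt (hkL.trans_le (Nat.pow_le_pow_right (by omega) (not_lt.1 h)))]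
    simp

variable (F : Type) [Field F] [Fintype F]

lemma sum_pow_ne_zero_iff (m : ℕ) :
    (∑ y : F, y ^ m) ≠ 0 ↔ 0 < m ∧ Fintype.card F - 1 ∣ m := by
  rcases Nat.eq_zero_or_pos m with rfl | hm
  · simp
  have h1 : ∑ y : F, y ^ m = ∑ y : Fˣ, (y : F) ^ m := by
    rw [← Finset.sum_erase (Finset.univ : Finset F) (a := 0) (by simp [hm.ne'])]
    refine (Finset.sum_bij' (s := (Finset.univ : Finset Fˣ))
      (t := (Finset.univ : Finset F).erase 0) (fun y _ => (y : F)) (fun y hy => Units.mk0 y (by simpa using hy))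
      ?_ ?_ ?_ ?_ ?_).symm <;> simp
  rw [h1, FiniteField.sum_pow_units]
  simp [hm]

/-- The coefficient of the monomial that `μ` contributes to the power sum. -/
noncomputable def termCoeff (p : ℕ) {d L : ℕ} (μ : Fin L → Fin (d + 1) → ℕ) : F :=
  (∏ j, (Nat.multinomial Finset.univ (μ j) : F)) * ∏ i : Fin d, ∑ y : F, y ^ part p μ i.succ

/-- The exponent of the monomial that `μ` contributes to the power sum. -/
def termExp (p : ℕ) {d L : ℕ} (μ : Fin L → Fin (d + 1) → ℕ) : ℕ :=
  d * part p μ 0 + ∑ i : Fin d, i * part p μ i.succ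

/-- The multinomial coefficients are units since the digits of `k` are less than `p`. -/
lemma termCoeff_ne_zero_iff [CharP F p] (hp : p.Prime) {μ : Fin L → Fin (d + 1) → ℕ}
    (hμ : μ ∈ digitMatrices p k d L) :
    termCoeff F p μ ≠ 0 ↔
      ∀ i : Fin d, 0 < part p μ i.succ ∧ Fintype.card F - 1 ∣ part p μ i.succ := by
  have hmult : (∏ j, (Nat.multinomial Finset.univ (μ j) : F)) ≠ 0 := by
    refine Finset.prod_ne_zero_iff.2 fun j _ => ?_
    rw [Ne, CharP.cast_eq_zero_iff F p]
    intro hdvd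
    have h1 := Nat.multinomial_spec Finset.univ (μ j)
    have h2 : p ∣ (∑ i, μ j i).factorial := h1 ▸ hdvd.mul_left _
    rw [hp.dvd_factorial, mem_digitMatrices.1 hμ j] at h2
    exact absurd (Nat.mod_lt _ hp.pos) (not_lt.2 h2)
  rw [termCoeff, mul_ne_zero_iff, and_iff_right hmult, Finset.prod_ne_zero_iff]
  simp only [Finset.mem_univ, true_implies, sum_pow_ne_zero_iff]

/-- The multinomial expansion of a `k`-th power in characteristic `p`, one base-`p` digit of `k` at
a time. -/
lemma sum_pow_expand {R ι : Type*} [CommRing R] [Fintype ι] [DecidableEq ι] [ExpChar R p]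
    (hkL : k < p ^ L) (x : ι → R) :
    (∑ i, x i) ^ k = ∑ μ ∈ Fintype.piFinset fun j : Fin L =>
        Finset.piAntidiag (Finset.univ : Finset ι) (k / p ^ (j : ℕ) % p),
      (∏ j, (Nat.multinomial Finset.univ (μ j) : R)) *
        ∏ i, x i ^ ∑ j : Fin L, μ j i * p ^ (j : ℕ) := by
  have h0 : k = ∑ j : Fin L, p ^ (j : ℕ) * (k / p ^ (j : ℕ) % p) := by
    have := val_digits p k L
    rw [val, Finset.sum_range, Nat.mod_eq_of_lt hkL] at this
    conv_lhs => rw [← this]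
    exact Finset.sum_congr rfl fun j _ => mul_comm _ _
  conv_lhs => rw [h0, ← Finset.prod_pow_eq_pow_sum]
  simp only [pow_mul, sum_pow_char_pow]
  simp only [Finset.sum_pow_eq_sum_piAntidiag]
  rw [Finset.prod_univ_sum]
  refine Finset.sum_congr rfl fun μ _ => ?_
  rw [Finset.prod_mul_distrib, Finset.prod_comm]
  congr 1
  refine Finset.prod_congr rfl fun i _ => ?_
  rw [← Finset.prod_pow_eq_pow_sum]
  refine Finset.prod_congr rfl fun j _ => ?_
  rw [← pow_mul, mul_comm]

lemma powerSum_eq [CharP F p] (hp : p.Prime) (hkL : k < p ^ L) :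
    powerSum F d k = ∑ μ ∈ digitMatrices p k d L, C (termCoeff F p μ) * X ^ termExp p μ := by
  have : Fact p.Prime := ⟨hp⟩
  have : ExpChar F[X] p := ExpChar.prime hp
  have h1 : ∀ c : Fin d → F, monicPoly F d c =
      ∑ i : Fin (d + 1), (Fin.cons (X ^ d) (fun i : Fin d => C (c i) * X ^ (i : ℕ)) :
        Fin (d + 1) → F[X]) i := by
    intro c
    rw [Fin.sum_univ_succ]
    simp [monicPoly]
  simp only [powerSum, h1, sum_pow_expand hkL]
  rw [Finset.sum_comm]
  refine Finset.sum_congr rfl fun μ _ => ?_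
  rw [← Finset.mul_sum]
  have h2 : ∀ c : Fin d → F, (∏ i : Fin (d + 1), (Fin.cons (X ^ d)
        (fun i : Fin d => C (c i) * X ^ (i : ℕ)) : Fin (d + 1) → F[X]) i ^
          ∑ j : Fin L, μ j i * p ^ (j : ℕ)) =
      C (∏ i : Fin d, c i ^ part p μ i.succ) * X ^ termExp p μ := by
    intro c
    rw [Fin.prod_univ_succ]
    simp only [Fin.cons_zero, Fin.cons_succ, mul_pow, Finset.prod_mul_distrib, termExp, pow_add,
      ← pow_mul, map_prod, map_pow, Finset.prod_pow_eq_pow_sum]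
    simp only [part]
    ring
  simp only [h2]
  rw [← Finset.sum_mul, ← map_sum, ← Fintype.prod_sum (fun i (y : F) => y ^ part p μ (Fin.succ i)),
    termCoeff, map_mul, map_prod, mul_assoc]
  simp

end

/-! ### Digit matrices and bins -/

/-- The columns of `μ` other than the `0`-th one as bins, extended by zero. -/
def binsOf {d L : ℕ} (μ : Fin L → Fin (d + 1) → ℕ) (i j : ℕ) : ℕ :=
  if h : i < d ∧ j < L then μ ⟨j, h.2⟩ (Fin.succ ⟨i, h.1⟩) else 0

/-- The digits of `k` below `L`, followed by digits `p - 1`. The extra digits make the supply of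
units in every class infinite. -/
def extDigit (p k L j : ℕ) : ℕ := if j < L then k / p ^ j % p else p - 1

/-- The digit matrix with the bins `b` as columns `1, …, d`; column `0` takes what remains of the
digits of `k`. -/
def matOf (p k d L : ℕ) (b : ℕ → ℕ → ℕ) (j : Fin L) : Fin (d + 1) → ℕ :=
  Fin.cons (k / p ^ (j : ℕ) % p - ∑ i ∈ Finset.range d, b i j) fun i : Fin d => b i j

section
variable {p f k d L : ℕ}

lemma val_binsOf (μ : Fin L → Fin (d + 1) → ℕ) (i : Fin d) :
    val p L (binsOf μ i) = part p μ i.succ := by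
  rw [val, Finset.sum_range, part]
  refine Finset.sum_congr rfl fun j _ => ?_
  rw [binsOf, dif_pos ⟨i.2, j.2⟩]

lemma valid_binsOf (hp : 0 < p) {μ : Fin L → Fin (d + 1) → ℕ} (hμ : μ ∈ digitMatrices p k d L)
    (h : ∀ i : Fin d, 0 < part p μ i.succ ∧ p ^ f - 1 ∣ part p μ i.succ) :
    Valid p f d L (extDigit p k L) (binsOf μ) := by
  refine ⟨fun j hj => ?_, fun i hi => ?_, fun i hi => ?_⟩
  · rw [extDigit, if_pos hj, ← mem_digitMatrices.1 hμ ⟨j, hj⟩, Fin.sum_univ_succ, Finset.sum_range]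
    refine le_trans (le_of_eq (Finset.sum_congr rfl fun i _ => ?_)) (Nat.le_add_left _ _)
    rw [binsOf, dif_pos ⟨i.2, hj⟩]
  · rw [val_binsOf μ ⟨i, hi⟩]
    exact (h _).1
  · rw [val_binsOf μ ⟨i, hi⟩]
    have h1 : (p : ℤ) ^ f - 1 = ((p ^ f - 1 : ℕ) : ℤ) := by
      rw [Nat.cast_sub (Nat.one_le_pow _ _ hp)]; simp
    rw [h1]
    exact_mod_cast (h ⟨i, hi⟩).2

lemma matOf_mem {b : ℕ → ℕ → ℕ} (hb : Valid p f d L (extDigit p k L) b) :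
    matOf p k d L b ∈ digitMatrices p k d L := by
  refine mem_digitMatrices.2 fun j => ?_
  have h1 := hb.le j j.2
  rw [extDigit, if_pos j.2] at h1
  rw [Fin.sum_univ_succ]
  simp only [matOf, Fin.cons_zero, Fin.cons_succ]
  rw [Finset.sum_range] at *
  omega

lemma part_matOf (b : ℕ → ℕ → ℕ) (i : Fin d) :
    part p (matOf p k d L b) i.succ = val p L (b i) := by
  rw [val, Finset.sum_range, part]
  simp [matOf]

lemma sum_sum_add (n : ℕ → ℕ) (d : ℕ) :
    ∑ i ∈ Finset.range d, i * n i + ∑ t ∈ Finset.range d, ∑ i ∈ Finset.range (t + 1), n i =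
      d * ∑ i ∈ Finset.range d, n i := by
  induction d with
  | zero => simp
  | succ d ih =>
    have h1 := Finset.sum_range_succ n d
    rw [Finset.sum_range_succ, Finset.sum_range_succ _ d]
    linear_combination ih - d * h1

/-- The monomials of highest degree are those of the tuples of least cost. -/
lemma termExp_add_binCost (hkL : k < p ^ L) {μ : Fin L → Fin (d + 1) → ℕ}
    (hμ : μ ∈ digitMatrices p k d L) :
    termExp p μ + binCost p d L (binsOf μ) = d * k := by
  have h1 := sum_sum_add (fun i => val p L (binsOf μ i)) d
  have h2 := sum_part hkL hμ
  rw [Fin.sum_univ_succ] at h2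
  rw [Finset.sum_range, Finset.sum_range (n := d) (f := fun i => val p L (binsOf μ i))] at h1
  simp only [val_binsOf] at h1
  rw [termExp, binCost, add_assoc, h1, ← mul_add, h2]

lemma binCost_congr {b b' : ℕ → ℕ → ℕ} (h : ∀ i < d, val p L (b i) = val p L (b' i)) :
    binCost p d L b = binCost p d L b' := by
  refine Finset.sum_congr rfl fun t ht => Finset.sum_congr rfl fun i hi => h i ?_
  rw [Finset.mem_range] at ht hi
  omega

lemma eq_of_part (hp : 0 < p) (hkL : k < p ^ L) {μ ν : Fin L → Fin (d + 1) → ℕ}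
    (hμ : μ ∈ digitMatrices p k d L) (hν : ν ∈ digitMatrices p k d L)
    (h : ∀ i : Fin d, part p μ i.succ = part p ν i.succ) : μ = ν := by
  have h0 : part p μ 0 = part p ν 0 := by
    have h1 := sum_part hkL hμ
    have h2 := sum_part hkL hν
    rw [Fin.sum_univ_succ] at h1 h2
    rw [Finset.sum_congr rfl fun i _ => h i] at h1
    omega
  have hall : ∀ i, part p μ i = part p ν i := fun i => Fin.cases h0 h i
  funext j i
  have h1 := digit_part hp hμ i j
  have h2 := digit_part hp hν i j
  rw [dif_pos j.2] at h1 h2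
  rw [← hall, h1] at h2
  exact h2

lemma exists_matrix (hp : 2 ≤ p) (hkL : k < p ^ L) {m : Fin (d + 1) → ℕ} (hm : NoCarry p m k) :
    ∃ μ ∈ digitMatrices p k d L, ∀ i, part p μ i = m i := by
  refine ⟨fun j i => m i / p ^ (j : ℕ) % p, mem_digitMatrices.2 fun j => ?_, fun i => ?_⟩
  · have := hm.2 j
    simpa only [Nat.getD_digits _ _ hp] using this
  · have h1 : m i ≤ k := hm.1 ▸ Finset.single_le_sum (fun _ _ => Nat.zero_le _) (Finset.mem_univ i)
    have h2 := val_digits p (m i) L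
    rw [Nat.mod_eq_of_lt (h1.trans_lt hkL), val, Finset.sum_range] at h2
    exact h2

end

end PowerSumAux


open PowerSumAux

theorem stmt1 (p f q : ℕ) (hp : p.Prime) (hf : 0 < f) (hq : q = p ^ f)
    (F : Type) [Field F] [Fintype F] (hF : Fintype.card F = q)
    (d k : ℕ) (hk : 0 < k) :
    powerSum F d k ≠ 0 ↔ (Uset p q d k).Nonempty := by
  subst hq
  have : Fact p.Prime := ⟨hp⟩
  have : NeZero f := ⟨hf.ne'⟩
  have : CharP F p := charP_of_card_eq_prime_pow hF
  obtain ⟨L, hkL⟩ : ∃ L, k < p ^ L := ⟨k, Nat.lt_pow_self hp.one_lt⟩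
  have hcoef {μ : Fin L → Fin (d + 1) → ℕ} (hμ : μ ∈ digitMatrices p k d L) :=
    termCoeff_ne_zero_iff F hp hμ
  rw [hF] at hcoef
  rw [powerSum_eq F hp hkL]
  constructor
  · intro hne
    obtain ⟨μ, hμ, hterm⟩ := Finset.exists_ne_zero_of_sum_ne_zero hne
    have hc : termCoeff F p μ ≠ 0 := fun h => hterm (by simp [h])
    refine ⟨part p μ, noCarry_part hp.two_le hkL hμ, fun i hi => ?_⟩
    obtain ⟨i, rfl⟩ := Fin.exists_succ_eq.2 (show i ≠ 0 by rintro rfl; simp at hi)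
    exact (hcoef hμ).1 hc i
  · rintro ⟨m, hm, hm'⟩
    obtain ⟨ν, hν, hpart⟩ := exists_matrix hp.two_le hkL hm
    have hvalid := valid_binsOf (f := f) hp.pos hν fun i => by
      rw [hpart]; exact hm' i.succ (by simp)
    obtain ⟨b, hb, huniq⟩ := exists_unique_min (f := f) hp.two_le
      (fun j hj => by rw [extDigit, if_neg (by omega)]; have := hp.two_le; omega)
      (fun j => by
        rw [extDigit]
        have := Nat.mod_lt (k / p ^ j) hp.pos
        split_ifs <;> omega) ⟨_, hvalid⟩
    have hmem := matOf_mem hb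
    have hval : ∀ i < d, val p L (binsOf (matOf p k d L b) i) = val p L (b i) := fun i hi => by
      rw [val_binsOf _ ⟨i, hi⟩, part_matOf]
    intro hzero
    have h1 := congrArg (fun P : F[X] => P.coeff (termExp p (matOf p k d L b))) hzero
    simp only [finsetSum_coeff, coeff_C_mul_X_pow, coeff_zero] at h1
    rw [Finset.sum_eq_single_of_mem _ hmem, if_pos rfl] at h1
    · refine (hcoef hmem).2 (fun i => ?_) h1
      rw [part_matOf]
      refine ⟨hb.pos i i.2, ?_⟩
      have h2 := hb.dvd i i.2
      have h3 : (p : ℤ) ^ f - 1 = ((p ^ f - 1 : ℕ) : ℤ) := by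
        rw [Nat.cast_sub (Nat.one_le_pow _ _ hp.pos)]; simp
      rw [h3] at h2
      exact_mod_cast h2
    · intro μ hμ hne
      split_ifs with hexp
      · by_contra hc
        have h2 := termExp_add_binCost hkL hμ
        have h3 := termExp_add_binCost hkL hmem
        rw [binCost_congr hval] at h3
        have h4 := huniq _ (valid_binsOf hp.pos hμ ((hcoef hμ).1 hc)) (by omega)
        refine hne (eq_of_part hp.pos hkL hμ hmem fun i => ?_)
        rw [part_matOf, ← h4 i i.2, val_binsOf]
      · rfl
end
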